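/- arXiv:1507.03750 — 10 statements merged into one kernel-verified Lean document; each statement's English description precedes it below -/
import Mathlib

section
/- For every θ > 0, L(θ) = exp{(1 − (1/2) x*(θ))ᵀ D x*(θ)} · (2π)^{-n/2} (det Σ)^{-1/2} ∫_{ℝ^n} v_θ(z) exp{−(1/2) zᵀ D z} dz, where v_θ(u) = exp{(x*(θ))ᵀ D (e^u − 1 − u)}. (Equivalently, I(θ) = L(θ)/L̃(θ) = √(det(I + ΣΛ(θ))) · E[v_θ(W)] for W a centred Gaussian vector with covariance matrix Σ.) -/
open Real Matrix MeasureTheory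

/-- For every θ > 0,
`L(θ) = exp{(1 − ½x*)ᵀ D x*} · (2π)^{-n/2} (det Σ)^{-1/2} ∫ v_θ(z) exp{−½ zᵀ D z} dz`,
where `v_θ(u) = exp{(x*)ᵀ D (e^u − 1 − u)}` and `x*` solves `θ e^{μ+x} + Dx = 0`. -/
theorem laplace_transform_saddlepoint_decomposition_v
    (n : ℕ) (hn : 1 ≤ n) (μ : Fin n → ℝ) (Sig : Matrix (Fin n) (Fin n) ℝ)
    (hSig : Sig.PosDef) (θ : ℝ) (hθ : 0 < θ)
    (D : Matrix (Fin n) (Fin n) ℝ) (hD : D = Sig⁻¹)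
    (xstar : Fin n → ℝ)
    (hx : ∀ i, θ * Real.exp (μ i + xstar i) + D.mulVec xstar i = 0) :
    let L : ℝ := (2 * π) ^ (-(n : ℝ) / 2) * Sig.det ^ (-(1 : ℝ) / 2) *
      ∫ x : Fin n → ℝ,
        Real.exp (-(θ * ∑ i, Real.exp (μ i + x i) + (1 / 2) * (x ⬝ᵥ D.mulVec x)))
    let v : (Fin n → ℝ) → ℝ := fun u =>
      Real.exp (xstar ⬝ᵥ D.mulVec (fun i => Real.exp (u i) - 1 - u i))
    L = Real.exp ((1 - (1 / 2 : ℝ) • xstar) ⬝ᵥ D.mulVec xstar) *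
        ((2 * π) ^ (-(n : ℝ) / 2) * Sig.det ^ (-(1 : ℝ) / 2) *
          ∫ z : Fin n → ℝ, v z * Real.exp (-(1 / 2) * (z ⬝ᵥ D.mulVec z))) := by
  intro L v
  have hsymm : Dᵀ = D := by
    have h1 : Sigᵀ = Sig := by
      have h := hSig.isHermitian.eq
      rwa [Matrix.conjTranspose_eq_transpose_of_trivial] at h
    rw [hD, Matrix.transpose_nonsing_inv, h1]
  have key : ∀ w : Fin n → ℝ, xstar ⬝ᵥ D.mulVec w = D.mulVec xstar ⬝ᵥ w := by
    intro w
    rw [Matrix.dotProduct_mulVec, ← Matrix.mulVec_transpose, hsymm]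
  have hI : (∫ x : Fin n → ℝ,
        Real.exp (-(θ * ∑ i, Real.exp (μ i + x i) + (1 / 2) * (x ⬝ᵥ D.mulVec x))))
      = Real.exp ((1 - (1 / 2 : ℝ) • xstar) ⬝ᵥ D.mulVec xstar) *
        ∫ z : Fin n → ℝ, v z * Real.exp (-(1 / 2) * (z ⬝ᵥ D.mulVec z)) := by
    rw [← integral_const_mul, ← integral_add_right_eq_self _ xstar]
    refine integral_congr_ae (Filter.Eventually.of_forall fun z => ?_)
    simp only [v, ← Real.exp_add]
    congr 1
    have e1 : θ * ∑ i, Real.exp (μ i + (z + xstar) i)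
        = -(D.mulVec xstar ⬝ᵥ fun i => Real.exp (z i)) := by
      rw [Finset.mul_sum, dotProduct, ← Finset.sum_neg_distrib]
      refine Finset.sum_congr rfl fun i _ => ?_
      have h2 : μ i + (z + xstar) i = (μ i + xstar i) + z i := by
        simp only [Pi.add_apply]; ring
      rw [h2, Real.exp_add]
      linear_combination Real.exp (z i) * hx i
    have e2 : (fun i => Real.exp (z i) - 1 - z i) = (fun i => Real.exp (z i)) - 1 - z := by
      ext i; simp
    rw [e1, e2, key, Matrix.mulVec_add, add_dotProduct, dotProduct_add, dotProduct_add,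
      key z, sub_dotProduct, smul_dotProduct, dotProduct_sub, dotProduct_sub,
      dotProduct_comm z (D.mulVec xstar), dotProduct_comm 1 (D.mulVec xstar), smul_eq_mul]
    ring
  simp only [L]
  rw [hI]
  ring
end

section
/- Define σ_i(θ) = ((Λ(θ)+D)_{ii})^{-1/2} = (θ e^{μ_i + x*_i(θ)} + D_{ii})^{-1/2}, σ(θ) = (σ_1(θ),…,σ_n(θ)), and M(θ) = diag(σ(θ)) (Λ(θ)+D) diag(σ(θ)). Then for every θ > 0, I(θ) = L(θ)/L̃(θ) = ∫_{ℝ^n} (2π)^{-n/2} (det M(θ))^{1/2} exp{ −(1/2) zᵀ M(θ) z − θ ∑_{i=1}^n e^{μ_i + x*_i(θ)} ( e^{σ_i(θ) z_i} − 1 − σ_i(θ) z_i − (1/2) σ_i(θ)² z_i² ) } dz. -/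
open Real Matrix MeasureTheory

theorem integral_affine_diag_aux {n : ℕ} (s : Fin n → ℝ) (hs : ∀ i, 0 < s i) (c : Fin n → ℝ)
    (f : (Fin n → ℝ) → ℝ) (hf : Continuous f) :
    ∫ x, f x = (∏ i, s i) * ∫ z : Fin n → ℝ, f (fun i => c i + s i * z i) := by
  have hp : 0 < ∏ i, s i := Finset.prod_pos fun i _ => hs i
  have hdet : (Matrix.diagonal s).det ≠ 0 := by
    rw [Matrix.det_diagonal]; exact hp.ne'
  have h1 := Real.map_matrix_volume_pi_eq_smul_volume_pi hdet
  have hlin : Continuous (Matrix.toLin' (Matrix.diagonal s)) :=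
    LinearMap.continuous_of_finiteDimensional _
  have h2 : ∫ y, f (c + y) ∂(Measure.map (Matrix.toLin' (Matrix.diagonal s)) volume)
      = ∫ z, f (c + Matrix.toLin' (Matrix.diagonal s) z) :=
    integral_map hlin.measurable.aemeasurable
      (by fun_prop : Continuous fun y => f (c + y)).aestronglyMeasurable
  rw [h1, integral_smul_measure, integral_add_left_eq_self f c, Matrix.det_diagonal,
    ENNReal.toReal_ofReal (abs_nonneg _), abs_of_pos (inv_pos.2 hp), smul_eq_mul] at h2
  have h3 : (fun z : Fin n → ℝ => f (fun i => c i + s i * z i))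
      = fun z => f (c + Matrix.toLin' (Matrix.diagonal s) z) := by
    funext z
    congr 1
    funext i
    simp [Matrix.toLin'_apply, Matrix.mulVec_diagonal]
  rw [h3, ← h2, ← mul_assoc, mul_inv_cancel₀ hp.ne', one_mul]

/-- With `σ_i(θ) = (θ e^{μ_i+x*_i} + D_{ii})^{-1/2}` and
`M(θ) = diag(σ) (Λ+D) diag(σ)`, for every θ > 0 the correction factor
`I(θ) = L(θ)/L̃(θ)` equals
`∫ (2π)^{-n/2} det(M)^{1/2} exp{−½ zᵀ M z − θ ∑ i e^{μ_i+x*_i}(e^{σ_i z_i} − 1 − σ_i z_i − ½σ_i² z_i²)} dz`. -/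
theorem correction_factor_standardised_form
    (n : ℕ) (hn : 1 ≤ n) (μ : Fin n → ℝ) (Sig : Matrix (Fin n) (Fin n) ℝ)
    (hSig : Sig.PosDef) (θ : ℝ) (hθ : 0 < θ)
    (D : Matrix (Fin n) (Fin n) ℝ) (hD : D = Sig⁻¹)
    (xstar : Fin n → ℝ)
    (hx : ∀ i, θ * Real.exp (μ i + xstar i) + D.mulVec xstar i = 0) :
    let Λ : Matrix (Fin n) (Fin n) ℝ :=
      Matrix.diagonal fun i => θ * Real.exp (μ i + xstar i)
    let σ : Fin n → ℝ := fun i =>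
      (θ * Real.exp (μ i + xstar i) + D i i) ^ (-(1 : ℝ) / 2)
    let M : Matrix (Fin n) (Fin n) ℝ :=
      Matrix.diagonal σ * (Λ + D) * Matrix.diagonal σ
    let L : ℝ := (2 * π) ^ (-(n : ℝ) / 2) * Sig.det ^ (-(1 : ℝ) / 2) *
      ∫ x : Fin n → ℝ,
        Real.exp (-(θ * ∑ i, Real.exp (μ i + x i) + (1 / 2) * (x ⬝ᵥ D.mulVec x)))
    let Lt : ℝ := (1 + Sig * Λ).det ^ (-(1 : ℝ) / 2) *
      Real.exp ((1 - (1 / 2 : ℝ) • xstar) ⬝ᵥ D.mulVec xstar)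
    L / Lt =
      ∫ z : Fin n → ℝ, (2 * π) ^ (-(n : ℝ) / 2) * M.det ^ ((1 : ℝ) / 2) *
        Real.exp (-(1 / 2) * (z ⬝ᵥ M.mulVec z) -
          θ * ∑ i, Real.exp (μ i + xstar i) *
            (Real.exp (σ i * z i) - 1 - σ i * z i - (1 / 2) * (σ i) ^ 2 * (z i) ^ 2)) := by
  intro Λ σ M L Lt
  have hDp : D.PosDef := hD ▸ hSig.inv
  have ha : ∀ i, 0 < θ * Real.exp (μ i + xstar i) := fun i => by positivity
  have hΛ : Λ.PosDef := Matrix.PosDef.diagonal ha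
  have hA : (Λ + D).PosDef := hΛ.add hDp
  have hσ : ∀ i, 0 < σ i := fun i => Real.rpow_pos_of_pos (add_pos (ha i) hDp.diag_pos) _
  have hp : 0 < ∏ i, σ i := Finset.prod_pos fun i _ => hσ i
  have hS := hSig.det_pos
  have hAd := hA.det_pos
  have hM : M.det = (∏ i, σ i) ^ 2 * (Λ + D).det := by
    simp only [M, Matrix.det_mul, Matrix.det_diagonal]; ring
  have hdet : (1 + Sig * Λ).det = Sig.det * (Λ + D).det := by
    rw [← Matrix.det_mul, mul_add, hD, Matrix.mul_nonsing_inv _ (isUnit_iff_ne_zero.2 hS.ne'),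
      add_comm]
  have hMr : M.det ^ ((1 : ℝ) / 2) = (∏ i, σ i) * (Λ + D).det ^ ((1 : ℝ) / 2) := by
    rw [hM, Real.mul_rpow (by positivity) hAd.le, ← Real.sqrt_eq_rpow, Real.sqrt_sq hp.le]
  have hdr : (1 + Sig * Λ).det ^ (-(1 : ℝ) / 2)
      = Sig.det ^ (-(1 : ℝ) / 2) * ((Λ + D).det ^ ((1 : ℝ) / 2))⁻¹ := by
    rw [hdet, Real.mul_rpow hS.le hAd.le, ← Real.rpow_neg hAd.le]
    norm_num
  have hDT : Dᵀ = D := by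
    have := hDp.isHermitian
    simpa [Matrix.IsHermitian, Matrix.conjTranspose_eq_transpose_of_trivial] using this
  have hDx : D.mulVec xstar = fun i => -(θ * Real.exp (μ i + xstar i)) := by
    funext i; linarith [hx i]
  have key : ∀ z : Fin n → ℝ,
      Real.exp (-(θ * ∑ i, Real.exp (μ i + (xstar i + σ i * z i)) +
        (1 / 2) * ((fun i => xstar i + σ i * z i) ⬝ᵥ D.mulVec (fun i => xstar i + σ i * z i))))
      = Real.exp ((1 - (1 / 2 : ℝ) • xstar) ⬝ᵥ D.mulVec xstar) *
        Real.exp (-(1 / 2) * (z ⬝ᵥ M.mulVec z) -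
          θ * ∑ i, Real.exp (μ i + xstar i) *
            (Real.exp (σ i * z i) - 1 - σ i * z i - (1 / 2) * (σ i) ^ 2 * (z i) ^ 2)) := by
    intro z
    rw [← Real.exp_add]
    congr 1
    set w : Fin n → ℝ := fun i => σ i * z i with hw
    have e1 : (fun i => xstar i + σ i * z i) = xstar + w := rfl
    have e2 : z ⬝ᵥ M.mulVec z = w ⬝ᵥ Λ.mulVec w + w ⬝ᵥ D.mulVec w := by
      have hwz : (Matrix.diagonal σ).mulVec z = w := by
        funext i; simp [Matrix.mulVec_diagonal, hw]
      have hzw : z ᵥ* (Matrix.diagonal σ) = w := by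
        funext i; simp [Matrix.vecMul_diagonal, hw, mul_comm]
      simp only [M]
      rw [← Matrix.mulVec_mulVec, ← Matrix.mulVec_mulVec, hwz, Matrix.dotProduct_mulVec, hzw,
        Matrix.add_mulVec, dotProduct_add]
    have e3 : xstar ⬝ᵥ D.mulVec w = w ⬝ᵥ D.mulVec xstar := by
      rw [Matrix.dotProduct_mulVec, ← Matrix.mulVec_transpose, hDT, dotProduct_comm]
    have e4 : w ⬝ᵥ Λ.mulVec w = ∑ i, θ * Real.exp (μ i + xstar i) * (σ i ^ 2 * z i ^ 2) := by
      simp only [dotProduct, Λ, Matrix.mulVec_diagonal, hw]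
      exact Finset.sum_congr rfl fun i _ => by ring
    rw [e1, e2, Matrix.mulVec_add, dotProduct_add, add_dotProduct, add_dotProduct, e3, e4,
      sub_dotProduct, smul_dotProduct, smul_eq_mul]
    have e5 : (1 : Fin n → ℝ) ⬝ᵥ D.mulVec xstar = ∑ i, -(θ * Real.exp (μ i + xstar i)) := by
      rw [hDx]; simp [dotProduct]
    have e6 : w ⬝ᵥ D.mulVec xstar = ∑ i, -(θ * Real.exp (μ i + xstar i) * (σ i * z i)) := by
      rw [hDx]; simp only [dotProduct, hw]
      exact Finset.sum_congr rfl fun i _ => by ring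
    have e7 : θ * ∑ i, Real.exp (μ i + (xstar i + σ i * z i))
        = ∑ i, -(θ * Real.exp (μ i + xstar i) * (σ i * z i)) * (-1)
          + θ * ∑ i, Real.exp (μ i + xstar i) *
            (Real.exp (σ i * z i) - 1 - σ i * z i - (1 / 2) * (σ i) ^ 2 * (z i) ^ 2)
          + (∑ i, θ * Real.exp (μ i + xstar i) * (σ i ^ 2 * z i ^ 2)) * (1 / 2)
          - ∑ i, -(θ * Real.exp (μ i + xstar i)) := by
      rw [Finset.mul_sum, Finset.mul_sum, Finset.sum_mul, ← Finset.sum_add_distrib,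
        ← Finset.sum_add_distrib, ← Finset.sum_sub_distrib]
      refine Finset.sum_congr rfl fun i _ => ?_
      rw [← add_assoc, Real.exp_add]
      ring
    rw [e5, e6, e7, ← Finset.sum_mul]
    ring
  have hcont : Continuous fun x : Fin n → ℝ =>
      Real.exp (-(θ * ∑ i, Real.exp (μ i + x i) + (1 / 2) * (x ⬝ᵥ D.mulVec x))) := by
    simp only [dotProduct, Matrix.mulVec]
    fun_prop
  have hIntegral := integral_affine_diag_aux σ hσ xstar _ hcont
  simp only [key] at hIntegral
  rw [integral_const_mul] at hIntegral
  rw [integral_const_mul]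
  simp only [L, Lt]
  rw [hIntegral, hMr, hdr]
  have hS' : Sig.det ^ (-(1 : ℝ) / 2) ≠ 0 := (Real.rpow_pos_of_pos hS _).ne'
  have hA' : (Λ + D).det ^ ((1 : ℝ) / 2) ≠ 0 := (Real.rpow_pos_of_pos hAd _).ne'
  have hE := Real.exp_ne_zero ((1 - (1 / 2 : ℝ) • xstar) ⬝ᵥ D.mulVec xstar)
  generalize Sig.det ^ (-(1 : ℝ) / 2) = S at *
  generalize (Λ + D).det ^ ((1 : ℝ) / 2) = A at *
  generalize Real.exp ((1 - (1 / 2 : ℝ) • xstar) ⬝ᵥ D.mulVec xstar) = E at *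
  field_simp
end

section
/- Assume every row sum a_i = ∑_{j=1}^n D_{ij} of D = Σ^{-1} is strictly positive. Then for each i ∈ {1,…,n}, the remainder r_i(θ) := x*_i(θ) + log θ − log log θ + μ_i − log a_i satisfies r_i(θ) = O(log log θ / log θ) as θ → ∞; in particular x*_i(θ) = −log θ + log log θ − μ_i + log a_i + o(1) as θ → ∞. -/
open Real Matrix Filter Asymptotics

lemma aux_exp (t : ℝ) : t ^ 2 / (1 + |t|) ≤ t * (Real.exp t - 1) := by
  rcases le_total 0 t with h | h
  · rw [abs_of_nonneg h, div_le_iff₀ (by linarith)]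
    have h1 := Real.add_one_le_exp t
    have h2 : t * t ≤ t * (Real.exp t - 1) := mul_le_mul_of_nonneg_left (by linarith) h
    nlinarith [mul_nonneg (mul_nonneg h h) h, mul_le_mul_of_nonneg_right h2 h]
  · rw [abs_of_nonpos h, div_le_iff₀ (by linarith)]
    have h1 := Real.add_one_le_exp (-t)
    have h3 : Real.exp t * Real.exp (-t) = 1 := by rw [← Real.exp_add]; simp
    have h2 : Real.exp t * (1 - t) ≤ 1 := by
      nlinarith [mul_le_mul_of_nonneg_left h1 (Real.exp_pos t).le]
    nlinarith [mul_nonneg (neg_nonneg.2 h) (sub_nonneg.2 h2)]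

lemma aux_core (n : ℕ) (a b r : Fin n → ℝ) (D : Matrix (Fin n) (Fin n) ℝ)
    (hpsd : 0 ≤ ∑ i, r i * D.mulVec r i) (α L B : ℝ) (hα : 0 < α) (hL : 0 < L)
    (ha : ∀ i, α ≤ a i) (hb : ∀ i, |b i| ≤ B)
    (heq : ∀ i, L * (a i * (Real.exp (r i) - 1)) + D.mulVec r i = -b i)
    (hB : 2 * B ≤ α * L) (i : Fin n) :
    |r i| ≤ n * (1 + 2 * n) * (B / (α * L)) := by
  have hαL : 0 < α * L := mul_pos hα hL
  have hn : (1 : ℝ) ≤ n := by exact_mod_cast (Nat.one_le_iff_ne_zero.2 (by rintro rfl; exact i.elim0))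
  set R := ∑ i, |r i| with hR
  have hiR : ∀ i, |r i| ≤ R := fun i =>
    Finset.single_le_sum (f := fun i => |r i|) (fun _ _ => abs_nonneg _) (Finset.mem_univ i)
  have hR0 : 0 ≤ R := Finset.sum_nonneg fun _ _ => abs_nonneg _
  have hB0 : 0 ≤ B := (abs_nonneg _).trans (hb i)
  have key : α * L * ∑ i, r i ^ 2 / (1 + |r i|) ≤ B * R := by
    have h1 : ∀ i, α * L * (r i ^ 2 / (1 + |r i|)) ≤ B * |r i| - r i * D.mulVec r i := by
      intro i
      have e1 := aux_exp (r i)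
      have e0 : 0 ≤ r i ^ 2 / (1 + |r i|) := by positivity
      have e2 : α * (r i ^ 2 / (1 + |r i|)) ≤ a i * (r i * (Real.exp (r i) - 1)) :=
        mul_le_mul (ha i) e1 e0 (hα.le.trans (ha i))
      have e3 := mul_le_mul_of_nonneg_left e2 hL.le
      have e4 : -(b i * r i) ≤ B * |r i| := by
        refine (neg_le_abs _).trans ?_
        rw [abs_mul]
        exact mul_le_mul_of_nonneg_right (hb i) (abs_nonneg _)
      have e5 : L * (a i * (r i * (Real.exp (r i) - 1))) = - (b i * r i) - r i * D.mulVec r i := by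
        linear_combination r i * heq i
      linarith
    have h2 := Finset.sum_le_sum fun i (_ : i ∈ Finset.univ) => h1 i
    rw [Finset.sum_sub_distrib, ← Finset.mul_sum, ← Finset.mul_sum] at h2
    linarith
  have hlow : R - n ≤ ∑ i, r i ^ 2 / (1 + |r i|) := by
    have : ∑ i : Fin n, (|r i| - 1) ≤ ∑ i, r i ^ 2 / (1 + |r i|) := by
      refine Finset.sum_le_sum fun i _ => ?_
      rw [le_div_iff₀ (by positivity)]
      nlinarith [sq_abs (r i)]
    simpa [Finset.sum_sub_distrib] using this
  have hR2 : R ≤ 2 * n := by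
    by_contra! hc
    have h1 := mul_le_mul_of_nonneg_left hlow hαL.le
    have h2 := mul_le_mul_of_nonneg_right hB hR0
    have h3 := mul_pos hαL (sub_pos.2 hc)
    nlinarith
  have hlow2 : R ^ 2 ≤ n * (1 + 2 * n) * ∑ i, r i ^ 2 / (1 + |r i|) := by
    have h1 : R ^ 2 ≤ n * ∑ i, |r i| ^ 2 := by
      simpa using sq_sum_le_card_mul_sum_sq (s := Finset.univ) (f := fun i => |r i|)
    have h2 : ∑ i, |r i| ^ 2 ≤ (1 + 2 * n) * ∑ i, r i ^ 2 / (1 + |r i|) := by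
      rw [Finset.mul_sum]
      refine Finset.sum_le_sum fun i _ => ?_
      rw [sq_abs, ← mul_div_assoc, le_div_iff₀ (by positivity), mul_comm]
      exact mul_le_mul_of_nonneg_right (by linarith [hiR i]) (sq_nonneg _)
    nlinarith
  have hfin : R ≤ n * (1 + 2 * n) * (B / (α * L)) := by
    rw [← mul_div_assoc, le_div_iff₀ hαL]
    have hRR : R * (R * (α * L)) ≤ R * (n * (1 + 2 * n) * B) := by
      have h1 := mul_le_mul_of_nonneg_left hlow2 hαL.le
      have h2 := mul_le_mul_of_nonneg_left key (show (0:ℝ) ≤ n * (1 + 2 * n) by positivity)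
      nlinarith
    rcases hR0.eq_or_lt with h | h
    · rw [← h, zero_mul]; positivity
    · exact le_of_mul_le_mul_left hRR h
  exact (hiR i).trans hfin

/-- If every row sum `a_i = ∑ j, D i j` of `D = Σ⁻¹` is strictly
positive, then for each `i` the remainder
`r_i(θ) = x*_i(θ) + log θ − log log θ + μ_i − log a_i` is
`O(log log θ / log θ)` as `θ → ∞`; in particular
`x*_i(θ) = −log θ + log log θ − μ_i + log a_i + o(1)`. -/
theorem minimiser_asymptotics_positive_row_sums
    (n : ℕ) (hn : 1 ≤ n) (μ : Fin n → ℝ) (Sig : Matrix (Fin n) (Fin n) ℝ)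
    (hSig : Sig.PosDef)
    (D : Matrix (Fin n) (Fin n) ℝ) (hD : D = Sig⁻¹)
    (ha : ∀ i, 0 < ∑ j, D i j)
    (xs : ℝ → Fin n → ℝ)
    (hxs : ∀ θ > (0 : ℝ), ∀ i, θ * Real.exp (μ i + xs θ i) + D.mulVec (xs θ) i = 0) :
    ∀ i,
      (fun θ : ℝ => xs θ i + Real.log θ - Real.log (Real.log θ) + μ i -
          Real.log (∑ j, D i j)) =O[atTop]
        (fun θ : ℝ => Real.log (Real.log θ) / Real.log θ) ∧
      Tendsto
        (fun θ : ℝ => xs θ i + Real.log θ - Real.log (Real.log θ) + μ i -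
          Real.log (∑ j, D i j)) atTop (nhds 0) := by
  have hpd : D.PosDef := by rw [hD]; exact hSig.inv
  have hlog : Tendsto (fun θ : ℝ => Real.log θ) atTop atTop := Real.tendsto_log_atTop
  have hloglog : Tendsto (fun θ : ℝ => Real.log (Real.log θ)) atTop atTop := hlog.comp hlog
  have hq : Tendsto (fun θ : ℝ => Real.log (Real.log θ) / Real.log θ) atTop (nhds 0) :=
    (Real.isLittleO_log_id_atTop.tendsto_div_nhds_zero).comp hlog
  intro i
  set a : Fin n → ℝ := fun i => ∑ j, D i j with hadef
  obtain ⟨α, hα, hαa⟩ : ∃ α > 0, ∀ i, α ≤ a i := by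
    have : Nonempty (Fin n) := ⟨i⟩
    obtain ⟨k, hk⟩ := Finite.exists_min a
    exact ⟨a k, ha k, hk⟩
  set c : Fin n → ℝ := fun i => -μ i + Real.log (a i) with hc
  set C : ℝ := ∑ i, (a i + |D.mulVec c i|) with hC
  have hCi : ∀ i, a i + |D.mulVec c i| ≤ C := fun i =>
    Finset.single_le_sum (f := fun i => a i + |D.mulVec c i|)
      (fun k _ => add_nonneg (ha k).le (abs_nonneg _)) (Finset.mem_univ i)
  have hC0 : 0 < C := lt_of_lt_of_le (add_pos_of_pos_of_nonneg (ha i) (abs_nonneg _)) (hCi i)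
  have hO : (fun θ : ℝ => xs θ i + Real.log θ - Real.log (Real.log θ) + μ i -
          Real.log (∑ j, D i j)) =O[atTop]
        (fun θ : ℝ => Real.log (Real.log θ) / Real.log θ) := by
    refine IsBigO.of_bound (n * (1 + 2 * n) * (C / α)) ?_
    have hsmall : ∀ᶠ θ : ℝ in atTop, Real.log (Real.log θ) / Real.log θ < α / (2 * C) :=
      hq.eventually_lt_const (by positivity)
    filter_upwards [eventually_gt_atTop 0, hlog.eventually_gt_atTop 0,
      hloglog.eventually_ge_atTop 1, hsmall] with θ hθ hL hl hs
    set L := Real.log θ with hLdef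
    set l := Real.log L with hldef
    set r : Fin n → ℝ := fun i => xs θ i + L - l + μ i - Real.log (a i) with hr
    have hxr : xs θ = r + c + (l - L) • (fun _ => (1 : ℝ)) := by
      funext k
      simp only [hr, hc, Pi.add_apply, Pi.smul_apply, smul_eq_mul]
      ring
    have hmv : ∀ k, D.mulVec (xs θ) k = D.mulVec r k + D.mulVec c k + (l - L) * a k := by
      intro k
      rw [hxr, Matrix.mulVec_add, Matrix.mulVec_add, Matrix.mulVec_smul]
      simp [hadef, Matrix.mulVec, dotProduct]
    have hexp : ∀ k, θ * Real.exp (μ k + xs θ k) = L * (a k * Real.exp (r k)) := by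
      intro k
      have h1 : μ k + xs θ k = -L + (l + (Real.log (a k) + r k)) := by
        simp only [hr]; ring
      rw [h1, Real.exp_add, Real.exp_add, Real.exp_add, Real.exp_neg, hldef, Real.exp_log hL,
        Real.exp_log (ha k), hLdef, Real.exp_log hθ]
      field_simp
      rfl
    have hcore := aux_core n a (fun k => l * a k + D.mulVec c k) r D ?_ α L (C * l) hα hL hαa
      ?_ ?_ ?_ i
    · have hq0 : 0 ≤ l / L := by positivity
      rw [Real.norm_eq_abs, Real.norm_eq_abs, abs_of_nonneg hq0]
      refine le_trans hcore (le_of_eq ?_)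
      field_simp
    · have := hpd.posSemidef.dotProduct_mulVec_nonneg r
      simpa [dotProduct] using this
    · intro k
      have h1 := abs_add_le (l * a k) (D.mulVec c k)
      rw [abs_of_nonneg (mul_nonneg (by linarith) (ha k).le)] at h1
      have h2 := mul_le_mul_of_nonneg_right (hCi k) (show 0 ≤ l by linarith)
      have h3 := mul_le_mul_of_nonneg_left hl (abs_nonneg (D.mulVec c k))
      linarith
    · intro k
      have h := hxs θ hθ k
      rw [hexp, hmv] at h
      linear_combination h
    · rw [div_lt_div_iff₀ hL (by positivity)] at hs
      linarith
  exact ⟨hO, hO.trans_tendsto hq⟩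
end

section
/- Let {1,…,n} = P ⊔ N be a partition with N nonempty, and suppose that for every i ∈ N one has θ e^{μ_i + x*_i(θ)} → 0 as θ → ∞. Then every component of the vector x*_N(θ) + (D_{N,N})^{-1} D_{N,P} x*_P(θ) tends to 0 as θ → ∞, where x*_N, x*_P denote the subvectors of x*(θ) indexed by N and P, and D_{N,N}, D_{N,P} are the corresponding submatrices of D (the principal submatrix D_{N,N} of the positive definite matrix D being invertible). -/
open Real Matrix Filter

/-- If `{1,…,n} = P ⊔ N` with `N` nonempty and
`θ e^{μ_i + x*_i(θ)} → 0` for every `i ∈ N`, then every component of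
`x*_N(θ) + (D_{N,N})⁻¹ D_{N,P} x*_P(θ)` tends to 0 as `θ → ∞`. -/
theorem minimiser_subvector_relation
    (n : ℕ) (hn : 1 ≤ n) (μ : Fin n → ℝ) (Sig : Matrix (Fin n) (Fin n) ℝ)
    (hSig : Sig.PosDef)
    (D : Matrix (Fin n) (Fin n) ℝ) (hD : D = Sig⁻¹)
    (P N : Finset (Fin n)) (hdisj : Disjoint P N) (hunion : P ∪ N = Finset.univ)
    (hNne : N.Nonempty)
    (xs : ℝ → Fin n → ℝ)
    (hxs : ∀ θ > (0 : ℝ), ∀ i, θ * Real.exp (μ i + xs θ i) + D.mulVec (xs θ) i = 0)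
    (htend : ∀ i ∈ N,
      Tendsto (fun θ : ℝ => θ * Real.exp (μ i + xs θ i)) atTop (nhds 0)) :
    let DNN : Matrix N N ℝ := Matrix.of fun i j : N => D i.1 j.1
    let DNP : Matrix N P ℝ := Matrix.of fun (i : N) (j : P) => D i.1 j.1
    ∀ i : N,
      Tendsto
        (fun θ : ℝ =>
          xs θ i.1 + (DNN⁻¹ * DNP).mulVec (fun j : P => xs θ j.1) i)
        atTop (nhds 0) := by
  intro DNN DNP i
  have hDpos : D.PosDef := hD ▸ hSig.inv
  have hNN : DNN.PosDef := by
    have h := hDpos.submatrix (e := fun j : N => j.1) Subtype.val_injective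
    exact h
  have hdet : IsUnit DNN.det := (Matrix.isUnit_iff_isUnit_det _).1 hNN.isUnit
  have key : ∀ θ > (0 : ℝ),
      xs θ i.1 + (DNN⁻¹ * DNP).mulVec (fun j : P => xs θ j.1) i
        = - ∑ j : N, DNN⁻¹ i j * (θ * Real.exp (μ j.1 + xs θ j.1)) := by
    intro θ hθ
    have h1 : DNN.mulVec (fun j : N => xs θ j.1) + DNP.mulVec (fun j : P => xs θ j.1)
        = - fun j : N => θ * Real.exp (μ j.1 + xs θ j.1) := by
      funext k
      have h := hxs θ hθ k.1
      have hs : D.mulVec (xs θ) k.1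
          = ∑ j : P, D k.1 j.1 * xs θ j.1 + ∑ j : N, D k.1 j.1 * xs θ j.1 := by
        rw [Finset.sum_coe_sort P (fun j => D k.1 j * xs θ j),
          Finset.sum_coe_sort N (fun j => D k.1 j * xs θ j),
          ← Finset.sum_union hdisj, hunion]
        rfl
      have e1 : DNN.mulVec (fun j : N => xs θ j.1) k = ∑ j : N, D k.1 j.1 * xs θ j.1 := rfl
      have e2 : DNP.mulVec (fun j : P => xs θ j.1) k = ∑ j : P, D k.1 j.1 * xs θ j.1 := rfl
      rw [Pi.add_apply, Pi.neg_apply, e1, e2]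
      linarith
    have h2 := congrArg (fun v => DNN⁻¹.mulVec v) h1
    simp only [Matrix.mulVec_add, Matrix.mulVec_neg, Matrix.mulVec_mulVec,
      Matrix.nonsing_inv_mul _ hdet, Matrix.one_mulVec] at h2
    exact congrFun h2 i
  have hlim : Tendsto (fun θ : ℝ =>
      - ∑ j : N, DNN⁻¹ i j * (θ * Real.exp (μ j.1 + xs θ j.1))) atTop (nhds 0) := by
    have h : Tendsto (fun θ : ℝ =>
        - ∑ j : N, DNN⁻¹ i j * (θ * Real.exp (μ j.1 + xs θ j.1))) atTop
        (nhds (- ∑ j : N, DNN⁻¹ i j * 0)) :=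
      (tendsto_finsetSum _ fun j _ => (htend j.1 j.2).const_mul _).neg
    simpa using h
  refine hlim.congr' ?_
  filter_upwards [eventually_gt_atTop (0 : ℝ)] with θ hθ
  exact (key θ hθ).symm
end

section
/- Let D be a symmetric positive definite n×n real matrix, and let {1,…,n} = P ⊔ Q be a partition with P nonempty. Suppose b ∈ ℝ^n satisfies b_i = 1 for all i ∈ P, (Db)_i = 0 for all i ∈ Q, and (Db)_i > 0 for all i ∈ P. Then the Schur complement D̄ = D_{P,P} − D_{P,Q} (D_{Q,Q})^{-1} D_{Q,P} satisfies D̄·1 = (Db)_P, where 1 is the all-ones vector indexed by P; in particular every row sum of D̄ is strictly positive. -/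
open Matrix

/-- Let `D` be symmetric positive definite, `{1,…,n} = P ⊔ Q` with
`P` nonempty, and `b` with `b_i = 1` on `P`, `(Db)_i = 0` on `Q`, `(Db)_i > 0`
on `P`. Then the Schur complement `D̄ = D_{P,P} − D_{P,Q} D_{Q,Q}⁻¹ D_{Q,P}`
satisfies `D̄·1 = (Db)_P`; in particular every row sum of `D̄` is strictly
positive. -/
theorem schur_complement_row_sums_positive
    (n : ℕ) (hn : 1 ≤ n)
    (D : Matrix (Fin n) (Fin n) ℝ) (hD : D.PosDef)
    (P Q : Finset (Fin n)) (hdisj : Disjoint P Q) (hunion : P ∪ Q = Finset.univ)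
    (hPne : P.Nonempty)
    (b : Fin n → ℝ)
    (hbP : ∀ i ∈ P, b i = 1)
    (hDbQ : ∀ i ∈ Q, D.mulVec b i = 0)
    (hDbP : ∀ i ∈ P, 0 < D.mulVec b i) :
    let DPP : Matrix P P ℝ := Matrix.of fun i j : P => D i.1 j.1
    let DPQ : Matrix P Q ℝ := Matrix.of fun (i : P) (j : Q) => D i.1 j.1
    let DQQ : Matrix Q Q ℝ := Matrix.of fun i j : Q => D i.1 j.1
    let DQP : Matrix Q P ℝ := Matrix.of fun (i : Q) (j : P) => D i.1 j.1
    let Dbar : Matrix P P ℝ := DPP - DPQ * DQQ⁻¹ * DQP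
    (∀ i : P, Dbar.mulVec 1 i = D.mulVec b i.1) ∧
    (∀ i : P, 0 < ∑ j : P, Dbar i j) := by
  intro DPP DPQ DQQ DQP Dbar
  have hQQ : DQQ.PosDef := hD.submatrix (e := fun i : Q => i.1) Subtype.val_injective
  have hdet : IsUnit DQQ.det := (Matrix.isUnit_iff_isUnit_det _).1 hQQ.isUnit
  have hsplit : ∀ k, D.mulVec b k = (∑ j : P, D k j.1) + ∑ j : Q, D k j.1 * b j.1 := by
    intro k
    have h1 : D.mulVec b k = ∑ j ∈ P ∪ Q, D k j * b j := by
      rw [hunion]; rfl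
    rw [h1, Finset.sum_union hdisj, Finset.sum_coe_sort P (fun j => D k j),
      Finset.sum_coe_sort Q (fun j => D k j * b j)]
    congr 1
    exact Finset.sum_congr rfl fun j hj => by rw [hbP j hj, mul_one]
  have hq : DQP.mulVec 1 = - DQQ.mulVec (fun j : Q => b j.1) := by
    funext k
    have h := hDbQ k.1 k.2
    rw [hsplit] at h
    have e1 : DQP.mulVec 1 k = ∑ j : P, D k.1 j.1 := by
      simp [Matrix.mulVec, dotProduct, DQP]
    have e2 : DQQ.mulVec (fun j : Q => b j.1) k = ∑ j : Q, D k.1 j.1 * b j.1 := rfl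
    rw [Pi.neg_apply, e1, e2]
    linarith
  have main : ∀ i : P, Dbar.mulVec 1 i = D.mulVec b i.1 := by
    intro i
    have h : Dbar.mulVec 1 = DPP.mulVec 1 + DPQ.mulVec (fun j : Q => b j.1) := by
      simp only [Dbar]
      rw [Matrix.sub_mulVec, ← Matrix.mulVec_mulVec, hq, Matrix.mulVec_neg,
        Matrix.mulVec_mulVec, Matrix.mul_assoc, Matrix.nonsing_inv_mul _ hdet, Matrix.mul_one,
        sub_neg_eq_add]
    have e1 : DPP.mulVec 1 i = ∑ j : P, D i.1 j.1 := by
      simp [Matrix.mulVec, dotProduct, DPP]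
    have e2 : DPQ.mulVec (fun j : Q => b j.1) i = ∑ j : Q, D i.1 j.1 * b j.1 := rfl
    rw [h, Pi.add_apply, e1, e2, hsplit]
  refine ⟨main, fun i => ?_⟩
  have e : ∑ j : P, Dbar i j = Dbar.mulVec 1 i := by
    simp [Matrix.mulVec, dotProduct]
  rw [e, main i]
  exact hDbP i.1 i.2
end

section
/- For each i ∈ {1,…,n} and each real ℓ > 2, θ e^{μ_i + x*_i(θ)} · (θ e^{μ_i + x*_i(θ)} + D_{ii})^{-ℓ/2} → 0 as θ → ∞. -/
open Real Matrix Filter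

lemma ultra_lim (U : Ultrafilter ℝ) (f : ℝ → ℝ) (a b : ℝ)
    (h : ∀ᶠ t in (U : Filter ℝ), f t ∈ Set.Icc a b) :
    ∃ c ∈ Set.Icc a b, Tendsto f U (nhds c) := by
  have h2 : Set.Icc a b ∈ U.map f := h
  obtain ⟨c, hc, hle⟩ := (isCompact_Icc (a := a) (b := b)).ultrafilter_le_nhds' (U.map f) h2
  exact ⟨c, hc, hle⟩

lemma partial_solve {ι : Type} [Fintype ι] [DecidableEq ι] (S : Matrix ι ι ℝ) (hS : S.PosDef)
    (A : ι → Prop) (g : ι → ℝ) :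
    ∃ w : ι → ℝ, (∀ i, ¬ A i → w i = 0) ∧ ∀ a, A a → ∑ j, S a j * w j = g a := by
  classical
  let R : Matrix {i // A i} {i // A i} ℝ := S.submatrix Subtype.val Subtype.val
  have hR : R.PosDef := hS.submatrix Subtype.val_injective
  let y : {i // A i} → ℝ := R⁻¹ *ᵥ (fun a : {i // A i} => g a.1)
  have hy : R *ᵥ y = fun a : {i // A i} => g a.1 := by
    have hu : IsUnit R.det := (Matrix.isUnit_iff_isUnit_det R).1 hR.isUnit
    simp only [y, Matrix.mulVec_mulVec, Matrix.mul_nonsing_inv R hu, Matrix.one_mulVec]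
  refine ⟨fun i => if h : A i then y ⟨i, h⟩ else 0, fun i hi => by simp [hi], fun a ha => ?_⟩
  have h1 := congrFun hy ⟨a, ha⟩
  simp only [Matrix.mulVec, dotProduct, R, Matrix.submatrix_apply] at h1
  rw [← h1]
  rw [← Finset.sum_subset (Finset.subset_univ (Finset.univ.filter A))]
  · rw [← Finset.sum_subtype_eq_sum_filter]
    simp only [Finset.subtype_univ]
    refine Finset.sum_congr rfl fun x _ => ?_
    simp [x.2]
  · intro x _ hx
    have : ¬ A x := by simpa using hx
    simp [this]

lemma key (U : Ultrafilter ℝ) : ∀ (k : ℕ) (ι : Type) [Fintype ι] [DecidableEq ι],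
    Fintype.card ι ≤ k → ∀ (S : Matrix ι ι ℝ), S.PosDef → ∀ (T : ℝ → ℝ), Tendsto T U atTop →
    ∀ (lam b : ι → ℝ → ℝ), (∀ i, ∀ᶠ t in (U : Filter ℝ), 0 < lam i t) →
    (∀ i, b i =O[(U : Filter ℝ)] (fun _ => (1 : ℝ))) →
    (∀ i, ∀ᶠ t in (U : Filter ℝ), Real.log (lam i t) + ∑ j, S i j * lam j t = T t + b i t) →
    ∀ i c, 0 < c → ¬ Tendsto (lam i) U (nhds c) := by
  classical
  intro k
  induction k with
  | zero =>
    intro ι _ _ hk S hS T hT lam b hpos hb heq i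
    have := Fintype.card_pos_iff.2 ⟨i⟩
    omega
  | succ k ih =>
  intro ι _ _ hk S hS T hT lam b hpos hb heq i0 c hc hlim
  have hsymm : ∀ i j, S i j = S j i := fun i j => by
    have := hS.isHermitian.apply j i
    simpa using this
  have hposA : ∀ᶠ t in (U : Filter ℝ), ∀ i, 0 < lam i t := eventually_all.2 hpos
  have hT0 := hT.eventually_gt_atTop 0
  let s : ℝ → ℝ := fun t => T t + ∑ j, lam j t
  have hs : Tendsto s U atTop := by
    refine tendsto_atTop_mono' _ ?_ hT
    filter_upwards [hposA] with t ht
    have : 0 ≤ ∑ j, lam j t := Finset.sum_nonneg fun j _ => (ht j).le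
    simp only [s]; linarith
  have hs0 := hs.eventually_gt_atTop 0
  have hles : ∀ᶠ t in (U : Filter ℝ), ∀ i, lam i t ≤ s t := by
    filter_upwards [hposA, hT0] with t ht hT i
    have : lam i t ≤ ∑ j, lam j t :=
      Finset.single_le_sum (f := fun j => lam j t) (fun j _ => (ht j).le) (Finset.mem_univ i)
    simp only [s]; linarith
  have hu : ∀ i, ∃ c ∈ Set.Icc (0:ℝ) 1, Tendsto (fun t => lam i t / s t) U (nhds c) := by
    intro i
    apply ultra_lim
    filter_upwards [hposA, hs0, hles] with t h1 h2 h3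
    exact ⟨div_nonneg (h1 i).le h2.le, (div_le_one h2).2 (h3 i)⟩
  choose u hu01 hu using hu
  have hu0 : ∀ i, 0 ≤ u i := fun i => (hu01 i).1
  let τ : ℝ := 1 - ∑ j, u j
  have hτ : Tendsto (fun t => T t / s t) U (nhds τ) := by
    have : Tendsto (fun t => 1 - ∑ j, lam j t / s t) U (nhds τ) :=
      tendsto_const_nhds.sub (tendsto_finsetSum _ fun j _ => hu j)
    refine this.congr' ?_
    filter_upwards [hs0] with t ht
    rw [← Finset.sum_div]
    field_simp
    simp only [s]; ring
  have hτ0 : 0 ≤ τ := by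
    refine ge_of_tendsto hτ ?_
    filter_upwards [hs0, hT0] with t h1 h2
    positivity
  have hinv : Tendsto (fun t => (s t)⁻¹) U (nhds 0) := tendsto_inv_atTop_zero.comp hs
  have hbs : ∀ i, Tendsto (fun t => b i t / s t) U (nhds 0) := by
    intro i
    have h1 : (fun _ : ℝ => (1:ℝ)) =o[(U : Filter ℝ)] s :=
      (Asymptotics.isLittleO_const_left.2 (Or.inr (tendsto_norm_atTop_atTop.comp hs)))
    exact ((hb i).trans_isLittleO h1).tendsto_div_nhds_zero
  have hlog : ∀ i, Tendsto (fun t => Real.log (lam i t) / s t) U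
      (nhds (τ - ∑ j, S i j * u j)) := by
    intro i
    have h1 : Tendsto (fun t => T t / s t + b i t / s t - ∑ j, S i j * (lam j t / s t)) U
      (nhds (τ + 0 - ∑ j, S i j * u j)) :=
      (hτ.add (hbs i)).sub (tendsto_finsetSum _ fun j _ => (hu j).const_mul _)
    rw [add_zero] at h1
    refine h1.congr' ?_
    filter_upwards [heq i, hs0] with t h1 h2
    have h3 : ∑ j, S i j * (lam j t / s t) = (∑ j, S i j * lam j t) / s t := by
      rw [Finset.sum_div]; exact Finset.sum_congr rfl fun j _ => by ring
    rw [h3, ← add_div, ← sub_div, ← h1]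
    congr 1; ring
  have hlogs : Tendsto (fun t => Real.log (s t) / s t) U (nhds 0) :=
    Real.isLittleO_log_id_atTop.tendsto_div_nhds_zero.comp hs
  have hge : ∀ i, τ ≤ ∑ j, S i j * u j := by
    intro i
    have := le_of_tendsto_of_tendsto (hlog i) hlogs (by
      filter_upwards [hposA, hs0, hles] with t h1 h2 h3
      exact div_le_div_of_nonneg_right (Real.log_le_log (h1 i) (h3 i)) h2.le)
    linarith
  have hlogA : ∀ i, 0 < u i →
      Tendsto (fun t => Real.log (lam i t) - Real.log (s t)) U (nhds (Real.log (u i))) := by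
    intro i hi
    refine ((hu i).log hi.ne').congr' ?_
    filter_upwards [hposA, hs0] with t h1 h2
    exact Real.log_div (h1 i).ne' h2.ne'
  have hA : ∀ i, 0 < u i → ∑ j, S i j * u j = τ := by
    intro i hi
    have h1 := ((hlogA i hi).mul hinv).add hlogs
    simp only [mul_zero, add_zero] at h1
    have h2 : Tendsto (fun t => Real.log (lam i t) / s t) U (nhds 0) :=
      h1.congr fun t => by ring
    have := tendsto_nhds_unique h2 (hlog i)
    linarith
  have hτpos : 0 < τ := by
    rcases hτ0.lt_or_eq with h | h
    · exact h
    exfalso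
    have hune : u ≠ 0 := by
      intro h0
      simp [τ, h0] at h
    have h1 := hS.dotProduct_mulVec_pos hune
    have h2 : star u ⬝ᵥ (S *ᵥ u) = 0 := by
      simp only [dotProduct, Matrix.mulVec]
      refine Finset.sum_eq_zero fun i _ => ?_
      rcases (hu0 i).lt_or_eq with hi | hi
      · rw [hA i hi, ← h, mul_zero]
      · simp [← hi]
    linarith
  -- the new index set
  let Z : ι → Prop := fun i => u i = 0 ∧ ∑ j, S i j * u j = τ
  have hi0 : Z i0 := by
    constructor
    · have h1 := hlim.mul hinv
      simp only [mul_zero] at h1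
      exact tendsto_nhds_unique (hu i0) h1
    · have h1 := (hlim.log hc.ne').mul hinv
      simp only [mul_zero] at h1
      have := tendsto_nhds_unique (hlog i0) h1
      linarith
  have hcard : Fintype.card {i // Z i} ≤ k := by
    have : ∃ a, ¬ Z a := by
      by_contra! hall
      have := hi0.2
      rw [Finset.sum_eq_zero (fun j _ => by rw [(hall j).1, mul_zero])] at this
      linarith
    obtain ⟨a, ha⟩ := this
    have := Fintype.card_subtype_lt ha
    omega
  have hW : ∀ z, ∃ w : ι → ℝ, (∀ i, ¬ (0 < u i) → w i = 0) ∧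
      ∀ a, 0 < u a → ∑ j, S a j * w j = S a z :=
    fun z => partial_solve S hS (fun i => 0 < u i) (fun a => S a z)
  choose W hW0 hW1 using hW
  have hWsum : ∀ z, Z z → ∑ i, W z i = 1 := by
    intro z hz
    have e1 : ∑ i, W z i * τ = ∑ i, W z i * ∑ j, S i j * u j := by
      refine Finset.sum_congr rfl fun i _ => ?_
      by_cases h : 0 < u i
      · rw [hA i h]
      · rw [hW0 z i h]; simp
    have e2 : ∑ i, W z i * ∑ j, S i j * u j = ∑ j, u j * ∑ i, S j i * W z i := by
      simp only [Finset.mul_sum]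
      rw [Finset.sum_comm]
      refine Finset.sum_congr rfl fun i _ => Finset.sum_congr rfl fun j _ => ?_
      rw [hsymm i j]; ring
    have e3 : ∑ j, u j * ∑ i, S j i * W z i = ∑ j, S z j * u j := by
      refine Finset.sum_congr rfl fun j _ => ?_
      by_cases h : 0 < u j
      · rw [hW1 z j h, hsymm]; ring
      · have : u j = 0 := le_antisymm (not_lt.1 h) (hu0 j)
        simp [this]
    rw [e2, e3, hz.2, ← Finset.sum_mul] at e1
    exact mul_right_cancel₀ hτpos.ne' (by rw [e1, one_mul])
  let M : Matrix ι {i // Z i} ℝ := fun i z => (if i = z.1 then 1 else 0) - W z.1 i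
  let g : {i // Z i} → ι → ℝ := fun z j => S z.1 j - ∑ i, W z.1 i * S i j
  have hg0 : ∀ z a, 0 < u a → g z a = 0 := by
    intro z a ha
    have h1 := hW1 z.1 a ha
    have h2 : ∑ i, W z.1 i * S i a = ∑ j, S a j * W z.1 j :=
      Finset.sum_congr rfl fun j _ => by rw [hsymm j a]; ring
    simp only [g]
    rw [h2, h1, hsymm]; ring
  have hMS : ∀ z j, (Mᵀ * S) z j = g z j := by
    intro z j
    have hMt : ∀ i, Mᵀ z i = (if i = z.1 then 1 else 0) - W z.1 i := fun i => rfl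
    simp only [Matrix.mul_apply, hMt]
    simp [g, sub_mul, Finset.sum_sub_distrib]
  have hMSM : ∀ z z', (Mᵀ * S * M) z z' = g z z'.1 := by
    intro z z'
    rw [Matrix.mul_apply]
    have : ∀ j, (Mᵀ * S) z j * M j z' = if j = z'.1 then g z j else 0 := by
      intro j
      rw [hMS]
      simp only [M]
      by_cases h : 0 < u j
      · rw [hg0 z j h]; simp
      · rw [hW0 _ j h]; simp
    simp [this]
  have hWZ : ∀ (z : {i // Z i}) z', W z' z.1 = 0 := fun z z' =>
    hW0 _ _ (by rw [z.2.1]; exact lt_irrefl _)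
  have hPD : (Mᵀ * S * M).PosDef := by
    have hinj : Function.Injective M.mulVec := by
      intro x y hxy
      funext z
      have := congrFun hxy z.1
      simpa [Matrix.mulVec, dotProduct, M, hWZ, Subtype.val_inj] using this
    have := hS.conjTranspose_mul_mul_same hinj
    simpa [Matrix.conjTranspose_eq_transpose_of_trivial] using this
  have hN : ∀ j, ¬ Z j → ¬ 0 < u j → lam j =O[(U : Filter ℝ)] (fun _ => (1:ℝ)) := by
    intro j hj huj
    have huj0 : u j = 0 := le_antisymm (not_lt.1 huj) (hu0 j)
    have hlt : τ - ∑ i, S j i * u i < 0 := by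
      have h1 := hge j
      have h2 : ∑ i, S j i * u i ≠ τ := fun h => hj ⟨huj0, h⟩
      have := lt_of_le_of_ne h1 h2.symm
      linarith
    refine Asymptotics.IsBigO.of_bound 1 ?_
    filter_upwards [(hlog j).eventually_lt_const hlt, hposA, hs0] with t h1 h2 h3
    have h4 : Real.log (lam j t) < 0 := by
      by_contra! h
      exact absurd h1 (not_lt.2 (div_nonneg h h3.le))
    have h5 := (Real.log_neg_iff (h2 j)).1 h4
    rw [Real.norm_eq_abs, abs_of_pos (h2 j)]
    simp; exact h5.le
  refine ih {i // Z i} hcard (Mᵀ * S * M) hPD (fun t => Real.log (s t))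
    (Real.tendsto_log_atTop.comp hs) (fun z => lam z.1)
    (fun z t => Real.log (lam z.1 t) + ∑ z', (Mᵀ * S * M) z z' * lam z'.1 t - Real.log (s t))
    (fun z => hpos z.1) ?_ (fun z => Eventually.of_forall fun t => by ring) ⟨i0, hi0⟩ c hc hlim
  intro z
  have hbig : (fun t => (∑ i, W z.1 i * (Real.log (lam i t) - Real.log (s t))) +
      (b z.1 t - ∑ i, W z.1 i * b i t) - ∑ j, (if Z j then 0 else g z j * lam j t))
      =O[(U : Filter ℝ)] (fun _ => (1:ℝ)) := by
    refine ((Asymptotics.IsBigO.fun_sum fun i _ => ?_).add ((hb z.1).sub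
      (Asymptotics.IsBigO.fun_sum fun i _ => (hb i).const_mul_left _))).sub
      (Asymptotics.IsBigO.fun_sum fun j _ => ?_)
    · by_cases h : 0 < u i
      · exact ((hlogA i h).isBigO_one ℝ).const_mul_left _
      · rw [hW0 _ i h]; simp only [zero_mul]; exact Asymptotics.isBigO_zero _ _
    · by_cases hZ : Z j
      · simp only [hZ, if_true]; exact Asymptotics.isBigO_zero _ _
      · simp only [hZ, if_false]
        by_cases h : 0 < u j
        · rw [hg0 z j h]; simp only [zero_mul]; exact Asymptotics.isBigO_zero _ _
        · exact (hN j hZ h).const_mul_left _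
  refine hbig.congr' ?_ EventuallyEq.rfl
  filter_upwards [eventually_all.2 heq] with t ht
  have e1 : ∑ z', (Mᵀ * S * M) z z' * lam z'.1 t
      = ∑ j, (if Z j then g z j * lam j t else 0) := by
    simp only [hMSM]
    rw [← Finset.sum_filter, ← Finset.sum_subtype_eq_sum_filter]
    simp only [Finset.subtype_univ]
  have e2 : ∑ j, (if Z j then g z j * lam j t else 0) + ∑ j, (if Z j then 0 else g z j * lam j t)
      = ∑ j, g z j * lam j t := by
    rw [← Finset.sum_add_distrib]
    refine Finset.sum_congr rfl fun j _ => ?_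
    split_ifs <;> simp
  have e3 : ∑ j, g z j * lam j t = ∑ j, S z.1 j * lam j t
      - ∑ i, W z.1 i * ∑ j, S i j * lam j t := by
    simp only [g, sub_mul, Finset.sum_sub_distrib, Finset.sum_mul, Finset.mul_sum]
    congr 1
    rw [Finset.sum_comm]
    refine Finset.sum_congr rfl fun j _ => Finset.sum_congr rfl fun i _ => by ring
  have e4 : ∑ i, W z.1 i * ∑ j, S i j * lam j t
      = T t + ∑ i, W z.1 i * b i t - ∑ i, W z.1 i * Real.log (lam i t) := by
    have : ∀ i, W z.1 i * ∑ j, S i j * lam j t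
        = W z.1 i * T t + W z.1 i * b i t - W z.1 i * Real.log (lam i t) := by
      intro i
      rw [← mul_add, ← mul_sub, ← ht i]; ring
    simp only [this, Finset.sum_sub_distrib, Finset.sum_add_distrib]
    rw [← Finset.sum_mul, hWsum z.1 z.2, one_mul]
  have e5 : ∑ i, W z.1 i * (Real.log (lam i t) - Real.log (s t))
      = ∑ i, W z.1 i * Real.log (lam i t) - Real.log (s t) := by
    simp only [mul_sub, Finset.sum_sub_distrib]
    rw [← Finset.sum_mul, hWsum z.1 z.2, one_mul]
  have e6 := ht z.1
  rw [e1, e5]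
  linarith



/-- For each `i` and each real `ℓ > 2`,
`θ e^{μ_i + x*_i(θ)} · (θ e^{μ_i + x*_i(θ)} + D_{ii})^{-ℓ/2} → 0` as `θ → ∞`. -/
theorem lambda_sigma_power_tendsto_zero
    (n : ℕ) (hn : 1 ≤ n) (μ : Fin n → ℝ) (Sig : Matrix (Fin n) (Fin n) ℝ)
    (hSig : Sig.PosDef)
    (D : Matrix (Fin n) (Fin n) ℝ) (hD : D = Sig⁻¹)
    (xs : ℝ → Fin n → ℝ)
    (hxs : ∀ θ > (0 : ℝ), ∀ i, θ * Real.exp (μ i + xs θ i) + D.mulVec (xs θ) i = 0) :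
    ∀ i : Fin n, ∀ ℓ : ℝ, 2 < ℓ →
      Tendsto
        (fun θ : ℝ => θ * Real.exp (μ i + xs θ i) *
          (θ * Real.exp (μ i + xs θ i) + D i i) ^ (-(ℓ / 2)))
        atTop (nhds 0) := by

  intro i ℓ hℓ
  have hDpd : D.PosDef := hD ▸ hSig.inv
  have hd : 0 < D i i := hDpd.diag_pos
  rw [tendsto_iff_ultrafilter]
  intro U hU
  have hU' : (U : Filter ℝ) ≤ atTop := hU
  have hpos0 : ∀ᶠ t in (U : Filter ℝ), (0:ℝ) < t := hU' (eventually_gt_atTop 0)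
  let lam : Fin n → ℝ → ℝ := fun j t => t * Real.exp (μ j + xs t j)
  have hpos : ∀ j, ∀ᶠ t in (U : Filter ℝ), 0 < lam j t := by
    intro j
    filter_upwards [hpos0] with t ht
    positivity
  have hkey := key U n (Fin n) (by simp) Sig hSig Real.log
    (Real.tendsto_log_atTop.mono_left hU') lam (fun j _ => μ j) hpos
    (fun j => Asymptotics.isBigO_const_const _ one_ne_zero _) (by
      intro j
      filter_upwards [hpos0] with t ht
      have h1 : D *ᵥ xs t = - fun k => lam k t := by
        funext k
        have := hxs t ht k
        simp only [Pi.neg_apply, lam]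
        linarith
      have hu : IsUnit Sig.det := (Matrix.isUnit_iff_isUnit_det Sig).1 hSig.isUnit
      have h2 : Sig *ᵥ (D *ᵥ xs t) = xs t := by
        rw [Matrix.mulVec_mulVec, hD, Matrix.mul_nonsing_inv Sig hu, Matrix.one_mulVec]
      rw [h1, Matrix.mulVec_neg] at h2
      have h3 := congrFun h2 j
      simp only [Pi.neg_apply, Matrix.mulVec, dotProduct] at h3
      have h4 : Real.log (lam j t) = Real.log t + (μ j + xs t j) := by
        simp only [lam]
        rw [Real.log_mul ht.ne' (Real.exp_ne_zero _), Real.log_exp]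
      rw [h4]; linarith) i
  change Tendsto (fun t => lam i t * (lam i t + D i i) ^ (-(ℓ / 2))) U (nhds 0)
  by_cases hB : ∃ C, ∀ᶠ t in (U : Filter ℝ), lam i t ≤ C
  · obtain ⟨C, hC⟩ := hB
    obtain ⟨c, hc, hlim⟩ := ultra_lim U (lam i) 0 C (by
      filter_upwards [hC, hpos i] with t h1 h2
      exact ⟨h2.le, h1⟩)
    have hc0 : c = 0 := by
      rcases hc.1.lt_or_eq with h | h
      · exact absurd hlim (hkey c h)
      · exact h.symm
    subst hc0
    have h1 : Tendsto (fun t => lam i t + D i i) U (nhds (0 + D i i)) :=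
      hlim.add tendsto_const_nhds
    have h2 := hlim.mul (h1.rpow_const (p := -(ℓ / 2)) (Or.inl (by linarith)))
    simpa only [zero_mul] using h2
  · have hinf : Tendsto (lam i) U atTop := by
      rw [tendsto_atTop]
      intro C
      have h1 := Ultrafilter.eventually_not.2 (fun h => hB ⟨C, h⟩)
      filter_upwards [h1] with t ht
      exact (not_le.1 ht).le
    have h1 : Tendsto (fun t => lam i t + D i i) U atTop :=
      tendsto_atTop_add_const_right _ _ hinf
    have h2 : Tendsto (fun t => (lam i t + D i i) ^ (-(ℓ / 2 - 1))) U (nhds 0) :=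
      (tendsto_rpow_neg_atTop (by linarith)).comp h1
    refine squeeze_zero' ?_ ?_ h2
    · filter_upwards [hpos i] with t ht
      positivity
    · filter_upwards [hpos i] with t ht
      have hp : 0 < lam i t + D i i := by positivity
      have : -(ℓ / 2 - 1) = 1 + -(ℓ / 2) := by ring
      rw [this, Real.rpow_add hp, Real.rpow_one]
      exact mul_le_mul_of_nonneg_right (by linarith) (by positivity)
end

section
/- Define σ_i(θ) = (θ e^{μ_i + x*_i(θ)} + D_{ii})^{-1/2}. Then for every fixed z ∈ ℝ^n, ∑_{i=1}^n θ e^{μ_i + x*_i(θ)} ( e^{σ_i(θ) z_i} − 1 − σ_i(θ) z_i − (1/2) σ_i(θ)² z_i² ) → 0 as θ → ∞. -/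
open Real Matrix Filter

lemma cs_aux {ι : Type*} [Fintype ι] [DecidableEq ι] {D : Matrix ι ι ℝ} (hD : D.PosDef)
    (y : ι → ℝ) (i : ι) : (D *ᵥ y) i ^ 2 ≤ D i i * (y ⬝ᵥ D *ᵥ y) := by
  have hd : 0 < D i i := hD.diag_pos
  have h := hD.posSemidef.dotProduct_mulVec_nonneg (D i i • y - ((D *ᵥ y) i) • Pi.single i (1 : ℝ))
  have hs : y ⬝ᵥ D.col i = (D *ᵥ y) i := by
    simp only [dotProduct, mulVec, Matrix.col_apply]
    refine Finset.sum_congr rfl fun k _ => ?_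
    have := hD.isHermitian.apply i k
    simp only [star_trivial] at this
    rw [this, mul_comm]
  simp only [star_trivial, mulVec_sub, mulVec_smul, sub_dotProduct, dotProduct_sub,
    smul_dotProduct, dotProduct_smul, mulVec_single_one, single_one_dotProduct, hs, smul_eq_mul,
    Matrix.col_apply] at h
  by_contra hc
  push Not at hc
  nlinarith [mul_lt_mul_of_pos_left hc hd]

lemma bound_aux {ι : Type*} [Fintype ι] [DecidableEq ι] {D : Matrix ι ι ℝ} (hD : D.PosDef)
    (y : ι → ℝ) (K : ℝ) (hK : 0 ≤ K) (h : ∀ k, y k * (D *ᵥ y) k ≤ K * |(D *ᵥ y) k|) (i : ι) :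
    |(D *ᵥ y) i| ≤ (Fintype.card ι : ℝ) * (∑ j, D j j) * K := by
  set u := D *ᵥ y with hu
  set S := ∑ j, |u j| with hS
  have hS0 : 0 ≤ S := Finset.sum_nonneg fun _ _ => abs_nonneg _
  have hT : 0 ≤ ∑ j, D j j := Finset.sum_nonneg fun _ _ => hD.diag_pos.le
  have hQ : y ⬝ᵥ u ≤ K * S := by
    rw [hS, Finset.mul_sum]
    exact Finset.sum_le_sum fun k _ => h k
  have h1 : S ^ 2 ≤ (Fintype.card ι : ℝ) * ∑ j, |u j| ^ 2 := by
    have := sq_sum_le_card_mul_sum_sq (s := Finset.univ) (f := fun j => |u j|)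
    simpa using this
  have h2 : ∑ j, |u j| ^ 2 ≤ (∑ j, D j j) * (y ⬝ᵥ u) := by
    rw [Finset.sum_mul]
    refine Finset.sum_le_sum fun k _ => ?_
    rw [sq_abs]
    exact cs_aux hD y k
  have h3 : S * S ≤ ((Fintype.card ι : ℝ) * (∑ j, D j j) * K) * S := by
    calc S * S = S ^ 2 := by ring
      _ ≤ (Fintype.card ι : ℝ) * ((∑ j, D j j) * (K * S)) := by
        refine h1.trans ?_
        gcongr
        exact h2.trans (by gcongr)
      _ = _ := by ring
  have h4 : S ≤ (Fintype.card ι : ℝ) * (∑ j, D j j) * K := by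
    rcases hS0.eq_or_lt with h0 | h0
    · rw [← h0]; positivity
    · exact le_of_mul_le_mul_right h3 h0
  refine le_trans ?_ h4
  exact Finset.single_le_sum (f := fun j => |u j|) (fun _ _ => abs_nonneg _) (Finset.mem_univ i)

lemma term_zero {T : Type*} {l : Filter T} {w : T → ℝ} (hw : Tendsto w l (nhds 0))
    (d z : ℝ) (hd : 0 < d) :
    Tendsto (fun t => w t * (Real.exp ((w t + d) ^ (-(1 : ℝ) / 2) * z)
            - 1 - (w t + d) ^ (-(1 : ℝ) / 2) * z
            - (1 / 2) * ((w t + d) ^ (-(1 : ℝ) / 2)) ^ 2 * z ^ 2)) l (nhds 0) := by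
  have hc : ContinuousAt (fun v : ℝ => v * (Real.exp ((v + d) ^ (-(1 : ℝ) / 2) * z)
            - 1 - (v + d) ^ (-(1 : ℝ) / 2) * z
            - (1 / 2) * ((v + d) ^ (-(1 : ℝ) / 2)) ^ 2 * z ^ 2)) 0 := by
    have hr : ContinuousAt (fun v : ℝ => (v + d) ^ (-(1 : ℝ) / 2)) 0 :=
      ContinuousAt.rpow_const (by fun_prop) (Or.inl (by simpa using hd.ne'))
    fun_prop
  have := hc.tendsto.comp hw
  simpa [Function.comp_def] using this

lemma term_top {T : Type*} {l : Filter T} {w : T → ℝ} (hw : Tendsto w l atTop)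
    (d z : ℝ) (hd : 0 < d) :
    Tendsto (fun t => w t * (Real.exp ((w t + d) ^ (-(1 : ℝ) / 2) * z)
            - 1 - (w t + d) ^ (-(1 : ℝ) / 2) * z
            - (1 / 2) * ((w t + d) ^ (-(1 : ℝ) / 2)) ^ 2 * z ^ 2)) l (nhds 0) := by
  have hs : Tendsto (fun t => (w t + d) ^ (-(1 : ℝ) / 2)) l (nhds 0) := by
    have h1 := tendsto_rpow_neg_atTop (y := (1 : ℝ) / 2) (by norm_num)
    have h2 := h1.comp (tendsto_atTop_add_const_right l d hw)
    simpa [Function.comp_def, neg_div] using h2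
  have hsz : Tendsto (fun t => |(w t + d) ^ (-(1 : ℝ) / 2) * z|) l (nhds 0) := by
    have := (hs.mul_const z).abs
    simpa using this
  have hb : Tendsto (fun t => (w t + d) ^ (-(1 : ℝ) / 2) * |z| ^ 3) l (nhds 0) := by
    simpa using hs.mul_const (|z| ^ 3)
  refine squeeze_zero_norm' ?_ hb
  filter_upwards [hw.eventually_gt_atTop 0, hsz.eventually_le_const (zero_lt_one)] with t h0 h1
  set s := (w t + d) ^ (-(1 : ℝ) / 2) with hsdef
  have hs0 : 0 < s := Real.rpow_pos_of_pos (by linarith) _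
  have hs2 : s ^ 2 * (w t + d) = 1 := by
    rw [hsdef, ← Real.rpow_natCast, ← Real.rpow_mul (by linarith)]
    norm_num
    rw [Real.rpow_neg_one]
    exact inv_mul_cancel₀ (by linarith)
  have hws : w t * s ^ 2 ≤ 1 := by nlinarith [sq_nonneg s]
  have he := Real.exp_bound h1 (n := 3) (by norm_num)
  norm_num [Finset.sum_range_succ, Nat.factorial] at he
  have he' : |Real.exp (s * z) - 1 - s * z - 1 / 2 * s ^ 2 * z ^ 2| ≤ |s * z| ^ 3 := by
    have e1 : Real.exp (s * z) - 1 - s * z - 1 / 2 * s ^ 2 * z ^ 2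
      = Real.exp (s * z) - (1 + s * z + (s * z) ^ 2 / 2) := by ring
    rw [e1, abs_mul]
    refine he.trans ?_
    have : 0 ≤ (|s| * |z|) ^ 3 := by positivity
    linarith
  rw [Real.norm_eq_abs, abs_mul, abs_of_pos h0]
  calc w t * |Real.exp (s * z) - 1 - s * z - 1 / 2 * s ^ 2 * z ^ 2| ≤ w t * |s * z| ^ 3 := by gcongr
    _ = (w t * s ^ 2) * (s * |z| ^ 3) := by rw [abs_mul, abs_of_pos hs0]; ring
    _ ≤ 1 * (s * |z| ^ 3) := by gcongr
    _ = _ := one_mul _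

lemma bigO_step {T : Type*} {l : Filter T} {ι : Type*} [Fintype ι] [DecidableEq ι]
    {D : Matrix ι ι ℝ} (hD : D.PosDef) (w : ι → T → ℝ) (ε : ι → ℝ) (hε : ∀ i, 0 < ε i)
    (hw : ∀ i, ∀ᶠ t in l, ε i ≤ w i t) (J : Finset ι) (L : T → ℝ) (hL : Tendsto L l atTop)
    (h : ∀ i ∈ J, (fun t => w i t - ∑ k ∈ J, D i k * (L t - Real.log (w k t)))
      =O[l] (fun _ => (1 : ℝ))) :
    ∃ C > 0, ∀ i ∈ J, ∀ᶠ t in l, w i t ≤ C * L t := by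
  have h' : ∀ i, ∃ C : ℝ, i ∈ J → ∀ᶠ t in l,
      |w i t - ∑ k ∈ J, D i k * (L t - Real.log (w k t))| ≤ C := by
    intro i
    by_cases hi : i ∈ J
    · obtain ⟨C, hC⟩ := (h i hi).bound
      exact ⟨C, fun _ => by simpa using hC⟩
    · exact ⟨0, fun h => absurd h hi⟩
  choose C hC using h'
  set C2 := ∑ k, |Real.log (ε k)| with hC2
  have hC20 : 0 ≤ C2 := Finset.sum_nonneg fun _ _ => abs_nonneg _
  have hT : 0 ≤ ∑ j, D j j := Finset.sum_nonneg fun _ _ => hD.diag_pos.le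
  set c := (Fintype.card ι : ℝ) * (∑ j, D j j) with hc
  have hc0 : 0 ≤ c := by positivity
  set C3 := ∑ k, |C k| with hC3
  have hC30 : 0 ≤ C3 := Finset.sum_nonneg fun _ _ => abs_nonneg _
  refine ⟨C3 + c * (1 + C2) + 1, by positivity, fun i hi => ?_⟩
  have hw' : ∀ᶠ t in l, ∀ k, ε k ≤ w k t := eventually_all.2 hw
  have hC' : ∀ᶠ t in l, ∀ k, k ∈ J →
      |w k t - ∑ j ∈ J, D k j * (L t - Real.log (w j t))| ≤ C k :=
    eventually_all.2 fun k => by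
      by_cases hk : k ∈ J
      · exact (hC k hk).mono fun _ h _ => h
      · exact Eventually.of_forall fun _ h => absurd h hk
  have hE : ∀ᶠ t in l, C3 ≤ Real.exp (L t) :=
    (Real.tendsto_exp_atTop.comp hL).eventually_ge_atTop C3
  filter_upwards [hw', hC', hE, hL.eventually_ge_atTop 1] with t hwt hCt hEt hLt
  set y : ι → ℝ := fun k => if k ∈ J then L t - Real.log (w k t) else 0 with hy
  have hDy : ∀ k, (D *ᵥ y) k = ∑ j ∈ J, D k j * (L t - Real.log (w j t)) := by
    intro k
    simp [mulVec, dotProduct, hy, Finset.sum_ite_mem]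
  have hCk : ∀ k, C k ≤ C3 := fun k => (le_abs_self _).trans
    (Finset.single_le_sum (f := fun j => |C j|) (fun _ _ => abs_nonneg _) (Finset.mem_univ k))
  have hyb : ∀ k, y k * (D *ᵥ y) k ≤ (L t + C2) * |(D *ᵥ y) k| := by
    intro k
    by_cases hk : k ∈ J
    · have hyk : y k = L t - Real.log (w k t) := by simp [hy, hk]
      have hwpos : 0 < w k t := (hε k).trans_le (hwt k)
      rcases le_or_gt 0 (y k) with h0 | h0
      · have h1 : Real.log (ε k) ≤ Real.log (w k t) := Real.log_le_log (hε k) (hwt k)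
        have h2 : |Real.log (ε k)| ≤ C2 :=
          Finset.single_le_sum (f := fun j => |Real.log (ε j)|) (fun _ _ => abs_nonneg _)
            (Finset.mem_univ k)
        have h3 : y k ≤ L t + C2 := by
          rw [hyk]; linarith [neg_abs_le (Real.log (ε k))]
        calc y k * (D *ᵥ y) k ≤ y k * |(D *ᵥ y) k| := by gcongr; exact le_abs_self _
          _ ≤ _ := by gcongr
      · have h1 : Real.exp (L t) < w k t := by
          rw [← Real.lt_log_iff_exp_lt hwpos]; linarith
        have h2 := hCt k hk
        rw [← hDy] at h2
        have h3 : 0 ≤ (D *ᵥ y) k := by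
          linarith [le_abs_self (w k t - (D *ᵥ y) k), hCk k]
        have : y k * (D *ᵥ y) k ≤ 0 := mul_nonpos_of_nonpos_of_nonneg h0.le h3
        have : 0 ≤ (L t + C2) * |(D *ᵥ y) k| := by positivity
        linarith
    · have hyk : y k = 0 := by simp [hy, hk]
      rw [hyk, zero_mul]
      positivity
  have hfin := bound_aux hD y (L t + C2) (by linarith) hyb i
  have h2 := hCt i hi
  rw [← hDy] at h2
  have h3 := le_abs_self (w i t - (D *ᵥ y) i)
  have h4 := le_abs_self ((D *ᵥ y) i)
  have h5 := hCk i
  have h6 : w i t ≤ C3 + c * (L t + C2) := by linarith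
  have h7 : C3 ≤ C3 * L t := le_mul_of_one_le_right hC30 hLt
  have h8 : c * C2 ≤ c * C2 * L t := le_mul_of_one_le_right (by positivity) hLt
  nlinarith

lemma key_aux {T : Type*} {l : Filter T} [l.NeBot] {ι : Type*} [Fintype ι] [DecidableEq ι]
    {D : Matrix ι ι ℝ} (hD : D.PosDef) (w : ι → T → ℝ) (ε : ι → ℝ) (hε : ∀ i, 0 < ε i)
    (hw : ∀ i, ∀ᶠ t in l, ε i ≤ w i t) (J : Finset ι) : ∀ (L : T → ℝ), Tendsto L l atTop →
    (∀ i ∈ J, (fun t => w i t - ∑ k ∈ J, D i k * (L t - Real.log (w k t)))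
      =O[l] (fun _ => (1 : ℝ))) → ∀ i ∈ J, Tendsto (w i) l atTop := by
  induction J using Finset.strongInduction with
  | H J ih =>
  intro L hL h
  obtain ⟨C, hC0, hC⟩ := bigO_step hD w ε hε hw J L hL h
  have h1L : (fun _ => (1 : ℝ)) =o[l] L := by
    rw [Asymptotics.isLittleO_const_left]
    exact Or.inr (tendsto_norm_atTop_atTop.comp hL)
  have hlogL : (fun t => Real.log (L t)) =o[l] L := Real.isLittleO_log_id_atTop.comp_tendsto hL
  have hlog : ∀ k ∈ J, (fun t => Real.log (w k t)) =o[l] L := by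
    intro k hk
    have hb : (fun t => Real.log (w k t)) =O[l]
        (fun t => (|Real.log (ε k)| + |Real.log C|) * 1 + |Real.log (L t)|) := by
      refine Asymptotics.IsBigO.of_bound 1 ?_
      filter_upwards [hw k, hC k hk, hL.eventually_ge_atTop 1] with t h1 h2 h3
      have hwpos : 0 < w k t := (hε k).trans_le h1
      have a1 : Real.log (ε k) ≤ Real.log (w k t) := Real.log_le_log (hε k) h1
      have a2 : Real.log (w k t) ≤ Real.log C + Real.log (L t) := by
        rw [← Real.log_mul hC0.ne' (by linarith)]
        exact Real.log_le_log hwpos h2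
      rw [one_mul, mul_one, Real.norm_eq_abs, Real.norm_eq_abs,
        abs_of_nonneg (a := |Real.log (ε k)| + |Real.log C| + |Real.log (L t)|) (by positivity)]
      rw [abs_le]
      constructor
      · linarith [neg_abs_le (Real.log (ε k)), abs_nonneg (Real.log C), abs_nonneg (Real.log (L t))]
      · linarith [le_abs_self (Real.log C), le_abs_self (Real.log (L t)),
          abs_nonneg (Real.log (ε k))]
    refine hb.trans_isLittleO ((h1L.const_mul_left _).add hlogL.norm_left)
  set a : ι → ℝ := fun i => ∑ k ∈ J, D i k with ha
  have hwa : ∀ i ∈ J, Tendsto (fun t => w i t / L t) l (nhds (a i)) := by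
    intro i hi
    have h1 : (fun t => w i t - a i * L t) =o[l] L := by
      have h2 := ((h i hi).trans_isLittleO h1L).sub
        (Asymptotics.IsLittleO.fun_sum (s := J) (A := fun k t => D i k * Real.log (w k t))
          (g' := L) (l := l) fun k hk => (hlog k hk).const_mul_left (D i k))
      refine h2.congr_left fun t => ?_
      simp only [ha, mul_sub, Finset.sum_sub_distrib, Finset.sum_mul]
      ring
    have h2 := h1.tendsto_div_nhds_zero.add_const (a i)
    rw [zero_add] at h2
    refine h2.congr' ?_
    filter_upwards [hL.eventually_ge_atTop 1] with t ht
    have : L t ≠ 0 := by linarith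
    field_simp
    ring
  have ha0 : ∀ i ∈ J, 0 ≤ a i := by
    intro i hi
    refine ge_of_tendsto (hwa i hi) ?_
    filter_upwards [hw i, hL.eventually_ge_atTop 1] with t h1 h2
    exact div_nonneg ((hε i).le.trans h1) (by linarith)
  have htop : ∀ i ∈ J, 0 < a i → Tendsto (w i) l atTop := by
    intro i hi hai
    refine ((hwa i hi).pos_mul_atTop hai hL).congr' ?_
    filter_upwards [hL.eventually_ge_atTop 1] with t ht
    exact div_mul_cancel₀ _ (by linarith)
  have hlogdiff : ∀ i ∈ J, 0 < a i →
      (fun t => Real.log (w i t) - Real.log (L t)) =O[l] (fun _ => (1 : ℝ)) := by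
    intro i hi hai
    have h1 : Tendsto (fun t => Real.log (w i t / L t)) l (nhds (Real.log (a i))) :=
      (hwa i hi).log hai.ne'
    refine Asymptotics.IsBigO.congr' (h1.isBigO_one ℝ) ?_ (EventuallyEq.refl _ _)
    filter_upwards [hL.eventually_ge_atTop 1, hw i] with t ht h2
    exact Real.log_div ((hε i).trans_le h2).ne' (by linarith)
  intro i hi
  rcases (ha0 i hi).lt_or_eq with hai | hai
  · exact htop i hi hai
  have hex : ∃ j ∈ J, a j ≠ 0 := by
    by_contra hcon
    push Not at hcon
    set x : ι → ℝ := fun k => if k ∈ J then 1 else 0 with hx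
    have hx0 : x ≠ 0 := by
      intro h0
      have := congrFun h0 i
      simp [hx, hi] at this
    have h1 := hD.dotProduct_mulVec_pos hx0
    have h2 : star x ⬝ᵥ D *ᵥ x = ∑ j ∈ J, a j := by
      simp [hx, dotProduct, mulVec, ha, Finset.sum_ite_mem]
    rw [h2, Finset.sum_eq_zero hcon] at h1
    exact lt_irrefl _ h1
  set J' := J.filter (fun k => a k = 0) with hJ'
  have hsub : J' ⊂ J := by
    rw [hJ', Finset.filter_ssubset]
    exact hex
  refine ih J' hsub (fun t => Real.log (L t)) (Real.tendsto_log_atTop.comp hL) ?_ i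
    (by simp [hJ', hi, ← hai])
  intro j hj
  rw [hJ', Finset.mem_filter] at hj
  have h3 := (h j hj.1).sub
    (Asymptotics.IsBigO.fun_sum (s := J.filter (fun k => ¬ a k = 0))
      (A := fun k t => D j k * (Real.log (w k t) - Real.log (L t)))
      (g := fun _ => (1 : ℝ)) (l := l) fun k hk => by
        rw [Finset.mem_filter] at hk
        exact (hlogdiff k hk.1 ((ha0 k hk.1).lt_of_ne' hk.2)).const_mul_left (D j k))
  refine h3.congr_left fun t => ?_
  have e1 := Finset.sum_filter_add_sum_filter_not J (fun k => a k = 0)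
    (fun k => D j k * (Real.log (L t) - Real.log (w k t)))
  have e2 : ∑ k ∈ J, D j k * (Real.log (L t) - Real.log (w k t))
      = ∑ k ∈ J, D j k * (L t - Real.log (w k t)) := by
    have e3 : (∑ k ∈ J, D j k) = 0 := hj.2
    simp only [mul_sub, Finset.sum_sub_distrib, ← Finset.sum_mul, e3, zero_mul]
  have e4 : ∑ k ∈ J with ¬ a k = 0, D j k * (Real.log (w k t) - Real.log (L t))
      = - ∑ k ∈ J with ¬ a k = 0, D j k * (Real.log (L t) - Real.log (w k t)) := by
    rw [← Finset.sum_neg_distrib]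
    exact Finset.sum_congr rfl fun k _ => by ring
  rw [← e2, ← e1, e4]
  ring

/-- With `σ_i(θ) = (θ e^{μ_i + x*_i(θ)} + D_{ii})^{-1/2}`, for every
fixed `z ∈ ℝⁿ`,
`∑ i, θ e^{μ_i + x*_i(θ)} (e^{σ_i z_i} − 1 − σ_i z_i − ½ σ_i² z_i²) → 0`
as `θ → ∞`. -/
theorem second_exponent_tendsto_zero
    (n : ℕ) (hn : 1 ≤ n) (μ : Fin n → ℝ) (Sig : Matrix (Fin n) (Fin n) ℝ)
    (hSig : Sig.PosDef)
    (D : Matrix (Fin n) (Fin n) ℝ) (hD : D = Sig⁻¹)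
    (xs : ℝ → Fin n → ℝ)
    (hxs : ∀ θ > (0 : ℝ), ∀ i, θ * Real.exp (μ i + xs θ i) + D.mulVec (xs θ) i = 0) :
    ∀ z : Fin n → ℝ,
      Tendsto
        (fun θ : ℝ => ∑ i, θ * Real.exp (μ i + xs θ i) *
          (Real.exp ((θ * Real.exp (μ i + xs θ i) + D i i) ^ (-(1 : ℝ) / 2) * z i)
            - 1 - (θ * Real.exp (μ i + xs θ i) + D i i) ^ (-(1 : ℝ) / 2) * z i
            - (1 / 2) * ((θ * Real.exp (μ i + xs θ i) + D i i) ^ (-(1 : ℝ) / 2)) ^ 2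
              * (z i) ^ 2))
        atTop (nhds 0) := by
  intro z
  have hDpd : D.PosDef := hD ▸ hSig.inv
  rw [tendsto_iff_ultrafilter]
  intro U hU
  have hθ : ∀ᶠ θ in (U : Filter ℝ), 0 < θ := hU (eventually_gt_atTop 0)
  set w : Fin n → ℝ → ℝ := fun i θ => θ * Real.exp (μ i + xs θ i) with hwdef
  have hwpos : ∀ i, ∀ θ > 0, 0 < w i θ := fun i θ h => mul_pos h (Real.exp_pos _)
  classical
  let R : Type := {i : Fin n // ¬ Tendsto (w i) U (nhds 0)}
  have hlow : ∀ i : R, ∃ ε > 0, ∀ᶠ t in (U : Filter ℝ), ε ≤ w i.1 t := by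
    intro i
    by_contra hcon
    push Not at hcon
    refine i.2 (Metric.tendsto_nhds.2 fun ε hε => ?_)
    have h1 := hcon ε hε
    filter_upwards [h1, hθ] with t ht h0
    rw [Real.dist_eq, sub_zero, abs_of_pos (hwpos _ _ h0)]
    exact ht
  choose ε hε hw using hlow
  let A : Matrix R R ℝ := Sig.submatrix Subtype.val Subtype.val
  have hA : A.PosDef := hSig.submatrix Subtype.val_injective
  have heq : ∀ i, ∀ θ > 0, ∑ j, Sig i j * w j θ = Real.log θ + μ i - Real.log (w i θ) := by
    intro i θ h0
    have h1 : (fun i => w i θ) = - (D *ᵥ xs θ) := by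
      funext i
      have := hxs θ h0 i
      simp only [hwdef, Pi.neg_apply]
      linarith
    have h2 : Sig *ᵥ (fun i => w i θ) = - xs θ := by
      rw [h1, mulVec_neg, mulVec_mulVec, hD, Matrix.mul_nonsing_inv _
        ((Matrix.isUnit_iff_isUnit_det _).1 hSig.isUnit), one_mulVec]
    have h3 := congrFun h2 i
    simp only [mulVec, dotProduct, Pi.neg_apply] at h3
    rw [h3]
    simp only [hwdef]
    rw [Real.log_mul h0.ne' (Real.exp_pos _).ne', Real.log_exp]
    ring
  have hrow : ∀ i : R, (fun θ => ∑ j : R, A i j * w j.1 θ - (Real.log θ - Real.log (w i.1 θ)))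
      =O[(U : Filter ℝ)] (fun _ => (1 : ℝ)) := by
    intro i
    have hz : (fun θ => ∑ j : {j : Fin n // ¬ ¬ Tendsto (w j) U (nhds 0)}, Sig i.1 j.1 * w j.1 θ)
        =O[(U : Filter ℝ)] (fun _ => (1 : ℝ)) :=
      Asymptotics.IsBigO.fun_sum fun j _ => ((not_not.1 j.2).isBigO_one ℝ).const_mul_left _
    have hc : (fun _ : ℝ => μ i.1) =O[(U : Filter ℝ)] (fun _ => (1 : ℝ)) :=
      Asymptotics.isBigO_const_const _ one_ne_zero _
    refine (hc.sub hz).congr' ?_ (EventuallyEq.refl _ _)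
    filter_upwards [hθ] with θ h0
    have h1 := heq i.1 θ h0
    have h2 := Fintype.sum_subtype_add_sum_subtype (fun j => ¬ Tendsto (w j) U (nhds 0))
      (fun j => Sig i.1 j * w j θ)
    simp only [A, Matrix.submatrix_apply]
    have h3 : (∑ j : R, Sig i.1 j.1 * w j.1 θ) =
      ∑ j : {j : Fin n // ¬ Tendsto (w j) U (nhds 0)}, Sig i.1 j.1 * w j.1 θ := rfl
    rw [h3]
    linarith
  have hinv : ∀ i ∈ (Finset.univ : Finset R), (fun θ => w i.1 θ
      - ∑ k ∈ (Finset.univ : Finset R), A⁻¹ i k * (Real.log θ - Real.log (w k.1 θ)))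
      =O[(U : Filter ℝ)] (fun _ => (1 : ℝ)) := by
    intro i _
    have h1 : (fun θ => ∑ k : R, A⁻¹ i k *
        (∑ j : R, A k j * w j.1 θ - (Real.log θ - Real.log (w k.1 θ))))
        =O[(U : Filter ℝ)] (fun _ => (1 : ℝ)) :=
      Asymptotics.IsBigO.fun_sum fun k _ => (hrow k).const_mul_left _
    refine h1.congr_left fun θ => ?_
    have h2 : A⁻¹ *ᵥ (A *ᵥ (fun j : R => w j.1 θ)) = fun j : R => w j.1 θ := by
      rw [mulVec_mulVec, Matrix.nonsing_inv_mul _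
        ((Matrix.isUnit_iff_isUnit_det _).1 hA.isUnit), one_mulVec]
    have h3 := congrFun h2 i
    simp only [mulVec, dotProduct] at h3
    simp only [mul_sub (A⁻¹ i _) (∑ j : R, _) _, Finset.sum_sub_distrib]
    rw [h3]
  have hkey := key_aux (l := (U : Filter ℝ)) hA.inv (fun i : R => w i.1) ε hε hw Finset.univ
    Real.log (Real.tendsto_log_atTop.mono_left hU) hinv
  have hterm : ∀ i, Tendsto (fun t => w i t * (Real.exp ((w i t + D i i) ^ (-(1 : ℝ) / 2) * z i)
            - 1 - (w i t + D i i) ^ (-(1 : ℝ) / 2) * z i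
            - (1 / 2) * ((w i t + D i i) ^ (-(1 : ℝ) / 2)) ^ 2 * (z i) ^ 2)) U (nhds 0) := by
    intro i
    by_cases hi : Tendsto (w i) U (nhds 0)
    · exact term_zero hi _ _ hDpd.diag_pos
    · exact term_top (hkey ⟨i, hi⟩ (Finset.mem_univ _)) _ _ hDpd.diag_pos
  have := tendsto_finsetSum Finset.univ fun i _ => hterm i
  simpa using this
end

section
/- I(θ) = L(θ)/L̃(θ) → 1 as θ → ∞; equivalently, L(θ) · (det(I + Σ Λ(θ)))^{1/2} · exp{−(1 − (1/2) x*(θ))ᵀ D x*(θ)} → 1 as θ → ∞. -/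
open Real Matrix Filter MeasureTheory

lemma aux_g_lower (y : ℝ) : y ^ 2 / (2 + |y|) ≤ Real.exp y - 1 - y := by
  have h2 : (0:ℝ) < 2 + |y| := by positivity
  rw [div_le_iff₀ h2]
  rcases le_total 0 y with h | h
  · rw [abs_of_nonneg h]
    nlinarith [Real.quadratic_le_exp_of_nonneg h, mul_nonneg h h, mul_nonneg h (mul_nonneg h h)]
  · rw [abs_of_nonpos h]
    -- a = -y : (e^{-a} - 1 + a)(2 + a) ≥ a^2, i.e. e^{-a}(2+a) ≥ 2 - a
    have key : ∀ a : ℝ, 0 ≤ a → 2 - a ≤ Real.exp (-a) * (2 + a) := by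
      intro a ha
      have hm : Monotone (fun a : ℝ => Real.exp (-a) * (2 + a) - (2 - a)) := by
        apply monotone_of_hasDerivAt_nonneg (f' := fun a => (Real.exp (-a) * (-1)) * (2 + a) + Real.exp (-a) * 1 + 1)
        · intro x
          have h1 : HasDerivAt (fun a : ℝ => Real.exp (-a)) (Real.exp (-x) * (-1)) x :=
            (hasDerivAt_neg x).exp
          have h2 : HasDerivAt (fun a : ℝ => 2 + a) 1 x := (hasDerivAt_id x).const_add 2
          have h3 : HasDerivAt (fun a : ℝ => 2 - a) (-1) x := (hasDerivAt_id x).const_sub 2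
          have := (h1.mul h2).sub h3
          exact this.congr_deriv (by ring)
        · intro x
          have h1 := Real.add_one_le_exp x
          have h2 := Real.exp_pos (-x)
          have h3 : Real.exp (-x) * Real.exp x = 1 := by rw [← Real.exp_add]; simp
          simp only [Pi.zero_apply]
          nlinarith
      have := hm ha
      simp at this
      linarith
    have := key (-y) (by linarith)
    simp only [neg_neg] at this
    nlinarith

lemma aux_g_upper (y : ℝ) (hy : |y| ≤ 1) : |Real.exp y - 1 - y - y ^ 2 / 2| ≤ |y| ^ 3 := by
  have := Real.exp_bound hy (n := 3) (by norm_num)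
  simp [Finset.sum_range_succ, Nat.factorial] at this
  have h3 : 0 ≤ |y| ^ 3 := by positivity
  calc _ = |Real.exp y - (1 + y + y ^ 2 / 2)| := by congr 1; ring
    _ ≤ _ := by linarith

lemma aux_integral_comp {n : ℕ} (B : Matrix (Fin n) (Fin n) ℝ) (hB : B.det ≠ 0)
    (f : (Fin n → ℝ) → ℝ) :
    ∫ z, f (B.mulVec z) = |B.det|⁻¹ * ∫ z, f z := by
  have h := Real.map_matrix_volume_pi_eq_smul_volume_pi hB
  have hemb : MeasurableEmbedding (Matrix.toLin' B) := by
    have := ((LinearEquiv.ofIsUnitDet (f := Matrix.toLin' B)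
      (v := Pi.basisFun ℝ (Fin n)) (v' := Pi.basisFun ℝ (Fin n)) (by
        simpa [LinearMap.toMatrix_eq_toMatrix', isUnit_iff_ne_zero] using hB)).toContinuousLinearEquiv.toHomeomorph).measurableEmbedding
    exact this
  have h2 := hemb.integral_map (μ := volume) f
  rw [h, integral_smul_measure] at h2
  rw [ENNReal.toReal_ofReal (abs_nonneg _), abs_inv, smul_eq_mul] at h2
  simpa using h2.symm

lemma aux_integrable_exp (m C : ℝ) (hm : 0 < m) :
    Integrable (fun z : ℝ => Real.exp (-(m * (|z| - C)))) := by
  set K : ℝ := 1 + 2 / m ^ 2 with hK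
  have h0 : Integrable (fun z : ℝ => (Real.exp (m * C) * K) * (1 + z ^ 2)⁻¹) :=
    integrable_inv_one_add_sq.const_mul _
  refine h0.mono' (by fun_prop) (Eventually.of_forall fun z => ?_)
  rw [Real.norm_eq_abs, abs_of_pos (Real.exp_pos _)]
  have e : -(m * (|z| - C)) = m * C + -(m * |z|) := by ring
  rw [e, Real.exp_add, mul_assoc]
  apply mul_le_mul_of_nonneg_left _ (Real.exp_pos _).le
  rw [Real.exp_neg, ← div_eq_mul_inv, inv_eq_one_div, div_le_div_iff₀ (Real.exp_pos _) (by positivity)]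
  have h1 := Real.quadratic_le_exp_of_nonneg (x := m * |z|) (by positivity)
  have h2 : (m * |z|) ^ 2 = m ^ 2 * z ^ 2 := by rw [mul_pow, sq_abs]
  have h3 : 0 ≤ m * |z| := by positivity
  have h4 : 1 + m ^ 2 * z ^ 2 / 2 ≤ Real.exp (m * |z|) := by rw [h2] at h1; linarith
  have h5 : K * (1 + m ^ 2 * z ^ 2 / 2) = 1 + z ^ 2 + 2 / m ^ 2 + m ^ 2 * z ^ 2 / 2 := by
    rw [hK]; field_simp; ring
  have h6 : 0 ≤ 2 / m ^ 2 + m ^ 2 * z ^ 2 / 2 := by positivity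
  have h7 : 0 ≤ K := by positivity
  nlinarith [mul_le_mul_of_nonneg_left h4 h7]

open scoped MatrixOrder in
lemma aux_factor {n : ℕ} (M : Matrix (Fin n) (Fin n) ℝ) (hM : M.PosDef) :
    ∃ B : Matrix (Fin n) (Fin n) ℝ, B.det ≠ 0 ∧ M = Bᵀ * B := by
  obtain ⟨y, hy, h⟩ := CStarAlgebra.isStrictlyPositive_iff_eq_star_mul_self.mp hM.isStrictlyPositive
  refine ⟨y, ?_, ?_⟩
  · exact ((Matrix.isUnit_iff_isUnit_det _).1 hy).ne_zero
  · simpa [Matrix.star_eq_conjTranspose] using h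

lemma aux_factor_quad {n : ℕ} (B : Matrix (Fin n) (Fin n) ℝ) (z : Fin n → ℝ) :
    z ⬝ᵥ (Bᵀ * B).mulVec z = ∑ i, (B.mulVec z i) ^ 2 := by
  rw [← Matrix.mulVec_mulVec, Matrix.dotProduct_mulVec, Matrix.vecMul_transpose]
  simp [dotProduct, sq]

lemma aux_gauss {n : ℕ} (M : Matrix (Fin n) (Fin n) ℝ) (hM : M.PosDef) :
    ∫ z : Fin n → ℝ, Real.exp (-((1 / 2) * (z ⬝ᵥ M.mulVec z))) =
      (2 * π) ^ ((n : ℝ) / 2) * M.det ^ (-(1 : ℝ) / 2) := by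
  obtain ⟨B, hB, rfl⟩ := aux_factor M hM
  have h := aux_integral_comp B hB (fun w => ∏ i, Real.exp (-(1 / 2) * (w i) ^ 2))
  rw [integral_fintype_prod_volume_eq_pow (fun x : ℝ => Real.exp (-(1/2) * x ^ 2)), integral_gaussian] at h
  have e : ∀ z : Fin n → ℝ, Real.exp (-((1 / 2) * (z ⬝ᵥ (Bᵀ * B).mulVec z))) =
      ∏ i, Real.exp (-(1 / 2) * (B.mulVec z i) ^ 2) := by
    intro z
    rw [aux_factor_quad, ← Real.exp_sum, Finset.mul_sum, ← Finset.sum_neg_distrib]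
    congr 1
    apply Finset.sum_congr rfl
    intros; ring
  simp_rw [e]
  rw [h, mul_comm]
  congr 1
  · rw [Fintype.card_fin, Real.sqrt_eq_rpow, ← Real.rpow_natCast, ← Real.rpow_mul (by positivity)]
    congr 1
    · ring
    · ring
  · rw [Matrix.det_mul, Matrix.det_transpose, ← abs_mul_abs_self, ← sq, ← Real.rpow_natCast, ← Real.rpow_mul (by positivity), ← Real.rpow_neg_one]
    congr 1
    norm_num

lemma aux_coercive {n : ℕ} (M : Matrix (Fin n) (Fin n) ℝ) (hM : M.PosDef) :
    ∃ d > 0, ∀ z : Fin n → ℝ, d * ∑ i, z i ^ 2 ≤ z ⬝ᵥ M.mulVec z := by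
  obtain ⟨B, hB, rfl⟩ := aux_factor M hM
  -- z = B⁻¹ (B z), |z_i|^2 ≤ (∑_j B⁻¹_ij^2) |Bz|^2
  set K : ℝ := 1 + ∑ i, ∑ j, (B⁻¹ i j) ^ 2 with hK
  have hKpos : 0 < K := by positivity
  refine ⟨K⁻¹, by positivity, fun z => ?_⟩
  rw [aux_factor_quad, inv_mul_le_iff₀ hKpos]
  have h1 : ∀ i, z i ^ 2 ≤ (∑ j, (B⁻¹ i j) ^ 2) * ∑ j, (B.mulVec z j) ^ 2 := by
    intro i
    have : z i = ∑ j, B⁻¹ i j * B.mulVec z j := by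
      have : B⁻¹.mulVec (B.mulVec z) = z := by
        rw [Matrix.mulVec_mulVec, Matrix.nonsing_inv_mul _ (isUnit_iff_ne_zero.2 hB), Matrix.one_mulVec]
      conv_lhs => rw [← this]
      rfl
    rw [this]
    exact Finset.sum_mul_sq_le_sq_mul_sq _ _ _
  calc ∑ i, z i ^ 2 ≤ ∑ i, (∑ j, (B⁻¹ i j) ^ 2) * ∑ j, (B.mulVec z j) ^ 2 := Finset.sum_le_sum fun i _ => h1 i
    _ = (∑ i, ∑ j, (B⁻¹ i j) ^ 2) * ∑ j, (B.mulVec z j) ^ 2 := by rw [Finset.sum_mul]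
    _ ≤ _ := by
      apply mul_le_mul_of_nonneg_right _ (by positivity)
      linarith

lemma aux_bound (lam s z d w : ℝ) (hlam : 0 < lam) (hs : 0 < s) (hsl : s ^ 2 * (1 + lam) = 1)
    (hd : 0 < d) (hw : (s * z) ^ 2 / (2 + |s * z|) ≤ w) :
    min 1 d * (|z| - 2) ≤ lam * w + d / 2 * (s * z) ^ 2 := by
  have hs1 : s ≤ 1 := by nlinarith [mul_pos (pow_pos hs 2) hlam]
  set q := (s * z) ^ 2 / (2 + |s * z|) with hq
  have hA : (0:ℝ) < 2 + |s * z| := by positivity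
  have hq0 : 0 ≤ q := by positivity
  have h1 : q ≤ (s * z) ^ 2 / 2 := by
    apply div_le_div_of_nonneg_left (by positivity) (by norm_num)
    linarith [abs_nonneg (s * z)]
  have h2 : (1 + lam) * q = z ^ 2 / (2 + |s * z|) := by
    rw [hq, mul_div_assoc', mul_pow]
    congr 1
    linear_combination z ^ 2 * hsl
  have h3 : |z| - 2 ≤ z ^ 2 / (2 + |s * z|) := by
    rw [le_div_iff₀ hA, abs_mul, abs_of_pos hs, ← sq_abs z]
    have hz := abs_nonneg z
    rcases le_total (|z|) 2 with h | h
    · nlinarith [mul_nonneg hs.le hz, sq_nonneg (|z|)]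
    · have : s * |z| ≤ |z| := by nlinarith
      nlinarith
  have hm1 : min 1 d ≤ 1 := min_le_left _ _
  have hm2 : min 1 d ≤ d := min_le_right _ _
  have hm0 : 0 < min 1 d := lt_min one_pos hd
  calc min 1 d * (|z| - 2) ≤ min 1 d * ((1 + lam) * q) := by
        rw [h2]; exact mul_le_mul_of_nonneg_left h3 hm0.le
    _ = min 1 d * (lam * q) + min 1 d * q := by ring
    _ ≤ 1 * (lam * q) + d * q := by
        have : 0 ≤ lam * q := by positivity
        gcongr
    _ ≤ lam * w + d / 2 * (s * z) ^ 2 := by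
        have := mul_le_mul_of_nonneg_left hw hlam.le
        have := mul_le_mul_of_nonneg_left h1 hd.le
        linarith

lemma aux_term (lam s : ℕ → ℝ) (b z : ℝ) (hlam : ∀ k, 0 < lam k) (hs : ∀ k, 0 < s k)
    (hsl : ∀ k, s k ^ 2 * (1 + lam k) = 1) (hb : Tendsto s atTop (nhds b)) (hb' : b = 0 ∨ b = 1)
    (φ : ℝ → ℝ) (hφc : Continuous φ) (hφ : ∀ y, |y| ≤ 1 → |φ y - y ^ 2 / 2| ≤ |y| ^ 3) :
    Tendsto (fun k => lam k * φ (s k * z)) atTop (nhds ((1 - b) * (z ^ 2 / 2))) := by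
  have hls : ∀ k, lam k * s k ^ 2 = 1 - s k ^ 2 := fun k => by linarith [hsl k]
  rcases hb' with rfl | rfl
  · have hsz : Tendsto (fun k => |s k * z|) atTop (nhds 0) := by
      have := (hb.mul_const z).abs
      simpa using this
    have h1 : Tendsto (fun k => (1 - s k ^ 2) * (z ^ 2 / 2)) atTop (nhds ((1 - 0) * (z ^ 2 / 2))) := by
      have := ((hb.pow 2).const_sub 1).mul_const (z ^ 2 / 2)
      simpa using this
    have h2 : Tendsto (fun k => lam k * φ (s k * z) - (1 - s k ^ 2) * (z ^ 2 / 2)) atTop (nhds 0) := by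
      apply squeeze_zero_norm' (a := fun k => s k * |z| ^ 3)
      · filter_upwards [hsz.eventually (ge_mem_nhds (zero_lt_one))] with k hk
        have h := hφ _ hk
        rw [← hls, Real.norm_eq_abs]
        have e : lam k * φ (s k * z) - lam k * s k ^ 2 * (z ^ 2 / 2) =
          lam k * (φ (s k * z) - (s k * z) ^ 2 / 2) := by ring
        rw [e, abs_mul, abs_of_pos (hlam k)]
        calc _ ≤ lam k * |s k * z| ^ 3 := mul_le_mul_of_nonneg_left h (hlam k).le
          _ = (lam k * s k ^ 2) * (s k * |z| ^ 3) := by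
            rw [abs_mul, abs_of_pos (hs k)]; ring
          _ ≤ 1 * (s k * |z| ^ 3) := by
            apply mul_le_mul_of_nonneg_right
            · rw [hls]; nlinarith [sq_nonneg (s k)]
            · have := hs k; positivity
          _ = _ := one_mul _
      · simpa using hb.mul_const (|z| ^ 3)
    simpa using h2.add h1
  · have h1 : Tendsto lam atTop (nhds 0) := by
      have e : lam = fun k => (s k ^ 2)⁻¹ - 1 := by
        funext k
        have := hs k
        have := hsl k
        field_simp
        linarith
      rw [e]
      have := ((hb.pow 2).inv₀ (by norm_num)).sub_const 1
      simpa using this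
    have h2 : Tendsto (fun k => φ (s k * z)) atTop (nhds (φ (1 * z))) :=
      (hφc.tendsto _).comp (hb.mul_const z)
    simpa using h1.mul h2

lemma aux_integrable_dom (n : ℕ) (m : ℝ) (hm : 0 < m) :
    Integrable (fun z : Fin n → ℝ => ∏ i, Real.exp (-(m * (|z i| - 2)))) :=
  Integrable.fintype_prod (f := fun _ x => Real.exp (-(m * (|x| - 2))))
    fun _ => aux_integrable_exp m 2 hm

lemma aux_dct {n : ℕ} (D : Matrix (Fin n) (Fin n) ℝ) (hD : D.PosDef)
    (lam s : ℕ → Fin n → ℝ) (b : Fin n → ℝ) (hlam : ∀ k i, 0 < lam k i) (hs : ∀ k i, 0 < s k i)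
    (hsl : ∀ k i, s k i ^ 2 * (1 + lam k i) = 1)
    (hb : ∀ i, Tendsto (fun k => s k i) atTop (nhds (b i))) (hb' : ∀ i, b i = 0 ∨ b i = 1)
    (φ : ℝ → ℝ) (hφc : Continuous φ) (hφ : ∀ y, |y| ≤ 1 → |φ y - y ^ 2 / 2| ≤ |y| ^ 3)
    (hφl : ∀ y, y ^ 2 / (2 + |y|) ≤ φ y) :
    Tendsto (fun k => ∫ z : Fin n → ℝ, Real.exp (-(∑ i, lam k i * φ (s k i * z i) +
        (1 / 2) * ((fun i => s k i * z i) ⬝ᵥ D.mulVec (fun i => s k i * z i))))) atTop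
      (nhds (∫ z : Fin n → ℝ, Real.exp (-(∑ i, (1 - b i) * (z i ^ 2 / 2) +
        (1 / 2) * ((fun i => b i * z i) ⬝ᵥ D.mulVec (fun i => b i * z i)))))) ∧
    0 < ∫ z : Fin n → ℝ, Real.exp (-(∑ i, (1 - b i) * (z i ^ 2 / 2) +
        (1 / 2) * ((fun i => b i * z i) ⬝ᵥ D.mulVec (fun i => b i * z i)))) := by
  obtain ⟨d, hd, hcoer⟩ := aux_coercive D hD
  have hm0 : 0 < min 1 d := lt_min one_pos hd
  have hdom := aux_integrable_dom n (min 1 d) hm0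
  have hbd : ∀ k (z : Fin n → ℝ), Real.exp (-(∑ i, lam k i * φ (s k i * z i) +
        (1 / 2) * ((fun i => s k i * z i) ⬝ᵥ D.mulVec (fun i => s k i * z i)))) ≤
        ∏ i, Real.exp (-(min 1 d * (|z i| - 2))) := by
    intro k z
    rw [← Real.exp_sum, Real.exp_le_exp, Finset.sum_neg_distrib, neg_le_neg_iff]
    calc ∑ i, min 1 d * (|z i| - 2) ≤ ∑ i, (lam k i * φ (s k i * z i) + d / 2 * (s k i * z i) ^ 2) :=
          Finset.sum_le_sum fun i _ => aux_bound _ _ _ _ _ (hlam k i) (hs k i) (hsl k i) hd (hφl _)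
      _ = ∑ i, lam k i * φ (s k i * z i) + (1 / 2) * (d * ∑ i, (s k i * z i) ^ 2) := by
          rw [Finset.sum_add_distrib, ← Finset.mul_sum]; ring
      _ ≤ _ := by
          have := hcoer (fun i => s k i * z i)
          linarith
  have hpt : ∀ z : Fin n → ℝ, Tendsto (fun k => Real.exp (-(∑ i, lam k i * φ (s k i * z i) +
        (1 / 2) * ((fun i => s k i * z i) ⬝ᵥ D.mulVec (fun i => s k i * z i))))) atTop
        (nhds (Real.exp (-(∑ i, (1 - b i) * (z i ^ 2 / 2) +
        (1 / 2) * ((fun i => b i * z i) ⬝ᵥ D.mulVec (fun i => b i * z i)))))) := by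
    intro z
    apply (Real.continuous_exp.tendsto _).comp
    apply Tendsto.neg
    apply Tendsto.add
    · exact tendsto_finsetSum _ fun i _ => aux_term _ _ _ _ (fun k => hlam k i) (fun k => hs k i)
        (fun k => hsl k i) (hb i) (hb' i) φ hφc hφ
    · apply Tendsto.const_mul
      have hc : Continuous (fun y : Fin n → ℝ => y ⬝ᵥ D.mulVec y) := by fun_prop
      exact (hc.tendsto _).comp (tendsto_pi_nhds.2 fun i => (hb i).mul_const (z i))
  refine ⟨tendsto_integral_of_dominated_convergence _ ?_ hdom ?_ ?_, ?_⟩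
  · intro k
    apply Continuous.aestronglyMeasurable
    fun_prop
  · intro k
    refine Eventually.of_forall fun z => ?_
    rw [Real.norm_eq_abs, abs_of_pos (Real.exp_pos _)]
    exact hbd k z
  · exact Eventually.of_forall hpt
  · apply integral_exp_pos
    refine hdom.mono' ?_ (Eventually.of_forall fun z => ?_)
    · apply Continuous.aestronglyMeasurable
      fun_prop
    · rw [Real.norm_eq_abs, abs_of_pos (Real.exp_pos _)]
      exact le_of_tendsto (hpt z) (Eventually.of_forall fun k => hbd k z)

lemma aux_ratio {n : ℕ} (D : Matrix (Fin n) (Fin n) ℝ) (hD : D.PosDef)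
    (lam s : ℕ → Fin n → ℝ) (b : Fin n → ℝ) (hlam : ∀ k i, 0 < lam k i) (hs : ∀ k i, 0 < s k i)
    (hsl : ∀ k i, s k i ^ 2 * (1 + lam k i) = 1)
    (hb : ∀ i, Tendsto (fun k => s k i) atTop (nhds (b i))) (hb' : ∀ i, b i = 0 ∨ b i = 1) :
    Tendsto (fun k =>
      (∫ y : Fin n → ℝ, Real.exp (-(∑ i, lam k i * (Real.exp (y i) - 1 - y i) +
        (1 / 2) * (y ⬝ᵥ D.mulVec y)))) /
      (∫ y : Fin n → ℝ, Real.exp (-(∑ i, lam k i * (y i ^ 2 / 2) +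
        (1 / 2) * (y ⬝ᵥ D.mulVec y))))) atTop (nhds 1) := by
  obtain ⟨h1, hpos⟩ := aux_dct D hD lam s b hlam hs hsl hb hb' (fun y => Real.exp y - 1 - y)
    (by fun_prop) aux_g_upper aux_g_lower
  obtain ⟨h2, -⟩ := aux_dct D hD lam s b hlam hs hsl hb hb' (fun y => y ^ 2 / 2)
    (by fun_prop) (fun y _ => by simp) (fun y => by
      apply div_le_div_of_nonneg_left (by positivity) (by norm_num)
      linarith [abs_nonneg y])
  have h3 := h1.div h2 hpos.ne'
  rw [div_self hpos.ne'] at h3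
  refine h3.congr fun k => ?_
  have hdet : (Matrix.diagonal (s k)).det ≠ 0 := by
    rw [Matrix.det_diagonal]
    exact Finset.prod_ne_zero_iff.2 fun i _ => (hs k i).ne'
  have e : ∀ z : Fin n → ℝ, (Matrix.diagonal (s k)).mulVec z = fun i => s k i * z i := by
    intro z; funext i; simp [Matrix.mulVec_diagonal]
  have c1 := aux_integral_comp _ hdet (fun y : Fin n → ℝ => Real.exp (-(∑ i, lam k i * (Real.exp (y i) - 1 - y i) +
        (1 / 2) * (y ⬝ᵥ D.mulVec y))))
  have c2 := aux_integral_comp _ hdet (fun y : Fin n → ℝ => Real.exp (-(∑ i, lam k i * (y i ^ 2 / 2) +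
        (1 / 2) * (y ⬝ᵥ D.mulVec y))))
  simp only [e] at c1 c2
  simp only [Pi.div_apply]
  rw [c1, c2, mul_div_mul_left]
  exact inv_ne_zero (abs_ne_zero.2 hdet)

open Asymptotics in
lemma aux_levels {α : Type} (U : Ultrafilter α) : ∀ (N : ℕ) (ι : Type) [Fintype ι] [DecidableEq ι],
    Fintype.card ι = N → ∀ (E : Matrix ι ι ℝ), E.PosDef → ∀ (t : α → ℝ), Tendsto t U atTop →
    ∀ (v : α → ι → ℝ) (c : ℝ), 0 < c → (∀ᶠ a in (U : Filter α), ∀ i, c ≤ v a i) →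
    (∀ i, (fun a => v a i - ∑ j, E i j * (t a - Real.log (v a j))) =O[(U : Filter α)] (fun _ => (1 : ℝ))) →
    ∀ i, Tendsto (fun a => v a i) U atTop := by
  intro N
  induction N using Nat.strong_induction_on with
  | _ N ih =>
  intro ι _ _ hN E hE t ht v c hc hv hO i0
  -- a maximal index
  obtain ⟨m, hm⟩ : ∃ m, ∀ᶠ a in (U : Filter α), ∀ i, v a i ≤ v a m := by
    have : Nonempty ι := ⟨i0⟩
    rw [← Ultrafilter.eventually_exists_iff]
    exact Eventually.of_forall fun a => Finite.exists_max (v a)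
  have hsum : ∀ i a, v a i - ∑ j, E i j * (t a - Real.log (v a j)) =
      (v a i - (∑ j, E i j) * t a) + ∑ j, E i j * Real.log (v a j) := by
    intro i a
    simp only [mul_sub, Finset.sum_sub_distrib, Finset.sum_mul]
    ring
  have htO : (fun _ : α => (1:ℝ)) =o[(U : Filter α)] t := by
    rw [isLittleO_const_left]
    right
    exact tendsto_norm_atTop_atTop.comp ht
  have ht0 : ∀ r : ℝ, (fun a => r * t a) =o[(U : Filter α)] t → r = 0 := by
    intro r hr
    by_contra h
    have h1 : (fun a => t a) =o[(U : Filter α)] t := (isLittleO_const_mul_left_iff h).1 hr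
    have h2 := h1.bound (c := 1/2) (by norm_num)
    obtain ⟨a, ha, ha'⟩ := (h2.and (ht.eventually_gt_atTop 0)).exists
    rw [Real.norm_eq_abs, abs_of_pos ha'] at ha
    linarith
  -- V → ∞
  have hV : Tendsto (fun a => v a m) U atTop := by
    by_contra hcon
    rw [tendsto_atTop] at hcon
    push Not at hcon
    obtain ⟨C, hC⟩ := hcon
    have hC' : ∀ᶠ a in (U : Filter α), v a m < C := hC
    have hvO : ∀ i, (fun a => v a i) =O[(U : Filter α)] (fun _ => (1:ℝ)) := by
      intro i
      apply IsBigO.of_bound C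
      filter_upwards [hv, hm, hC'] with a h1 h2 h3
      have := h1 i
      have := h2 i
      rw [Real.norm_eq_abs, abs_of_pos (by linarith)]
      simp; linarith
    have hlO : ∀ i, (fun a => Real.log (v a i)) =O[(U : Filter α)] (fun _ => (1:ℝ)) := by
      intro i
      apply IsBigO.of_bound (|Real.log c| + |Real.log C|)
      filter_upwards [hv, hm, hC'] with a h1 h2 h3
      have h4 := h1 i
      have h5 := h2 i
      have h6 := Real.log_le_log hc h4
      have h7 : Real.log (v a i) ≤ Real.log C := Real.log_le_log (by linarith) (by linarith)
      simp only [norm_one, mul_one, Real.norm_eq_abs]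
      rw [abs_le]
      constructor
      · linarith [neg_abs_le (Real.log c), abs_nonneg (Real.log C)]
      · linarith [le_abs_self (Real.log C), abs_nonneg (Real.log c)]
    have hrow : ∀ i, ∑ j, E i j = 0 := by
      intro i
      apply ht0
      refine IsBigO.trans_isLittleO ?_ htO
      have h1 : (fun a => ∑ j, E i j * Real.log (v a j)) =O[(U : Filter α)] (fun _ => (1:ℝ)) :=
        IsBigO.fun_sum fun j _ => (hlO j).const_mul_left _
      have h2 := ((hvO i).add h1).sub (hO i)
      refine h2.congr_left fun a => ?_
      rw [hsum]; ring
    have hne : (fun _ : ι => (1:ℝ)) ≠ 0 := fun h => by simpa using congrFun h i0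
    have := hE.dotProduct_mulVec_pos hne
    have h0 : E.mulVec (fun _ : ι => (1:ℝ)) = 0 := by
      funext i; simp [Matrix.mulVec, dotProduct, hrow i]
    rw [h0] at this
    simp at this
  -- logs
  have hlogV : Tendsto (fun a => Real.log (v a m)) U atTop := Real.tendsto_log_atTop.comp hV
  have hlogo : (fun a => Real.log (v a m)) =o[(U : Filter α)] (fun a => v a m) :=
    Real.isLittleO_log_id_atTop.comp_tendsto hV
  have h1log : (fun _ : α => (1:ℝ)) =o[(U : Filter α)] (fun a => Real.log (v a m)) := by
    rw [isLittleO_const_left]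
    right
    exact tendsto_norm_atTop_atTop.comp hlogV
  have hlO : ∀ i, (fun a => Real.log (v a i)) =O[(U : Filter α)] (fun a => Real.log (v a m)) := by
    intro i
    apply IsBigO.of_bound 1
    filter_upwards [hv, hm, hlogV.eventually_ge_atTop (|Real.log c|)] with a h1 h2 h3
    have h4 := h1 i
    have h5 := h2 i
    have h6 := Real.log_le_log hc h4
    have h7 : Real.log (v a i) ≤ Real.log (v a m) := Real.log_le_log (by linarith) (by linarith)
    rw [Real.norm_eq_abs, Real.norm_eq_abs, one_mul]
    rw [abs_le]
    have h8 := le_abs_self (Real.log (v a m))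
    constructor
    · linarith [neg_abs_le (Real.log c)]
    · linarith
  have hmain : ∀ i, (fun a => v a i - (∑ j, E i j) * t a) =O[(U : Filter α)] (fun a => Real.log (v a m)) := by
    intro i
    have h1 : (fun a => ∑ j, E i j * Real.log (v a j)) =O[(U : Filter α)] (fun a => Real.log (v a m)) :=
      IsBigO.fun_sum fun j _ => (hlO j).const_mul_left _
    have h2 := ((hO i).trans h1log.isBigO).sub h1
    refine h2.congr_left fun a => ?_
    rw [hsum]; ring
  have hVt : (fun a => v a m) =O[(U : Filter α)] t := by
    have h1 : (fun a => (∑ j, E m j) * t a - v a m) =o[(U : Filter α)] (fun a => v a m) := by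
      have := ((hmain m).trans_isLittleO hlogo).neg_left
      refine this.congr_left fun a => ?_
      ring
    have h2 : (fun a => v a m) =O[(U : Filter α)] (fun a => (∑ j, E m j) * t a) := by
      have : IsEquivalent (U : Filter α) (fun a => (∑ j, E m j) * t a) (fun a => v a m) := h1
      exact this.isBigO_symm
    exact h2.trans (isBigO_const_mul_self _ _ _)
  -- the low-level indices
  set P : ι → Prop := fun i => ∀ δ > 0, ∀ᶠ a in (U : Filter α), v a i < δ * v a m with hP
  have hT : ∀ i, ¬ P i → ∃ δ > 0, ∀ᶠ a in (U : Filter α), δ * v a m ≤ v a i := by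
    intro i hi
    simp only [hP] at hi
    push Not at hi
    obtain ⟨δ, hδ, h⟩ := hi
    exact ⟨δ, hδ, h⟩
  by_cases hi0 : P i0
  swap
  · obtain ⟨δ, hδ, h⟩ := hT i0 hi0
    exact tendsto_atTop_mono' _ h (hV.const_mul_atTop hδ)
  have hPm : ¬ P m := by
    intro h
    obtain ⟨a, ha, ha'⟩ := ((h 1 one_pos).and (hV.eventually_gt_atTop 0)).exists
    linarith
  have hrow : ∀ i, P i → ∑ j, E i j = 0 := by
    intro i hi
    apply ht0
    have h1 : (fun a => v a i) =o[(U : Filter α)] (fun a => v a m) := by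
      rw [isLittleO_iff]
      intro δ hδ
      filter_upwards [hi δ hδ, hv] with a h1 h2
      have h3 := h2 i
      have h4 := h2 m
      rw [Real.norm_eq_abs, Real.norm_eq_abs, abs_of_pos (by linarith), abs_of_pos (by linarith)]
      exact h1.le
    have h2 := (h1.sub ((hmain i).trans_isLittleO hlogo)).trans_isBigO hVt
    refine h2.congr_left fun a => ?_
    ring
  classical
  have hcard : Fintype.card {i // P i} < N := by
    rw [← hN]
    exact Fintype.card_subtype_lt hPm
  have key := ih _ hcard {i // P i} rfl (E.submatrix Subtype.val Subtype.val)
    (hE.submatrix Subtype.val_injective) (fun a => Real.log (v a m)) hlogV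
    (fun a i => v a i.1) c hc (hv.mono fun a ha i => ha i.1) ?_ ⟨i0, hi0⟩
  · exact key
  rintro ⟨i, hi⟩
  have hr : ∀ j : {j // ¬ P j}, (fun a => Real.log (v a m) - Real.log (v a j)) =O[(U : Filter α)] (fun _ => (1:ℝ)) := by
    rintro ⟨j, hj⟩
    obtain ⟨δ, hδ, h⟩ := hT j hj
    apply IsBigO.of_bound (|Real.log δ|)
    filter_upwards [h, hv, hm] with a h1 h2 h3
    have h4 := h2 m
    have h5 := h3 j
    have h6 := h2 j
    have h7 := Real.log_le_log (by linarith) h5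
    have h8 := Real.log_le_log (by apply mul_pos hδ; linarith) h1
    rw [Real.log_mul hδ.ne' (by linarith)] at h8
    rw [Real.norm_eq_abs, abs_of_nonneg (by linarith)]
    simp only [norm_one, mul_one]
    linarith [neg_abs_le (Real.log δ)]
  have h1 : (fun a => ∑ j : {j // ¬ P j}, E i j * (Real.log (v a m) - Real.log (v a j))) =O[(U : Filter α)] (fun _ => (1:ℝ)) :=
    IsBigO.fun_sum fun j _ => (hr j).const_mul_left _
  refine ((hO i).add h1).congr_left fun a => ?_
  have e0 := hrow i hi
  have e1 : ∑ j, E i j * (t a - Real.log (v a j)) = ∑ j, E i j * (Real.log (v a m) - Real.log (v a j)) := by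
    simp only [mul_sub, Finset.sum_sub_distrib, ← Finset.sum_mul, e0]
    ring
  have e2 := Fintype.sum_subtype_add_sum_subtype P (fun j => E i j * (Real.log (v a m) - Real.log (v a j)))
  rw [e1, ← e2]
  simp only [Matrix.submatrix_apply]
  ring

open Asymptotics in
lemma aux_dichotomy {α : Type} (U : Ultrafilter α) {n : ℕ} (S : Matrix (Fin n) (Fin n) ℝ) (hS : S.PosDef)
    (t : α → ℝ) (ht : Tendsto t U atTop) (μ : Fin n → ℝ) (v : α → Fin n → ℝ)
    (hv : ∀ᶠ a in (U : Filter α), ∀ i, 0 < v a i)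
    (h : ∀ᶠ a in (U : Filter α), ∀ i, S.mulVec (v a) i + Real.log (v a i) = t a + μ i) (i : Fin n) :
    Tendsto (fun a => v a i) U (nhds 0) ∨ Tendsto (fun a => v a i) U atTop := by
  classical
  set P : Fin n → Prop := fun i => ∃ c > 0, ∀ᶠ a in (U : Filter α), c ≤ v a i with hP
  have hZ : ∀ j, ¬ P j → Tendsto (fun a => v a j) U (nhds 0) := by
    intro j hj
    simp only [hP] at hj
    push Not at hj
    rw [Metric.tendsto_nhds]
    intro ε hε
    filter_upwards [hj ε hε, hv] with a h1 h2
    rw [Real.dist_eq, sub_zero, abs_of_pos (h2 j)]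
    exact h1
  by_cases hi : P i
  swap
  · exact Or.inl (hZ i hi)
  right
  obtain ⟨c, hc, hcv⟩ : ∃ c > 0, ∀ᶠ a in (U : Filter α), ∀ j : {j // P j}, c ≤ v a j := by
    choose f hf hf' using fun j : {j // P j} => j.2
    have : Nonempty {j // P j} := ⟨⟨i, hi⟩⟩
    obtain ⟨j0, hj0⟩ := Finite.exists_min f
    refine ⟨f j0, hf j0, ?_⟩
    have := eventually_all.2 hf'
    filter_upwards [this] with a ha j
    exact (hj0 j).trans (ha j)
  set SN : Matrix {j // P j} {j // P j} ℝ := S.submatrix Subtype.val Subtype.val with hSN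
  have hSNp : SN.PosDef := hS.submatrix Subtype.val_injective
  refine aux_levels U _ {j // P j} rfl SN⁻¹ hSNp.inv t ht (fun a j => v a j) c hc hcv ?_ ⟨i, hi⟩
  intro j
  -- residual
  set r : α → {j // P j} → ℝ := fun a j => SN.mulVec (fun j => v a j) j - (t a - Real.log (v a j)) with hr
  have hrO : ∀ j, (fun a => r a j) =O[(U : Filter α)] (fun _ => (1:ℝ)) := by
    intro j
    have h1 : (fun a => ∑ l : {l // ¬ P l}, S j l.1 * v a l.1) =O[(U : Filter α)] (fun _ => (1:ℝ)) :=
      IsBigO.fun_sum fun l _ => ((hZ l.1 l.2).isBigO_one ℝ).const_mul_left _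
    have h2 : (fun a => μ j - ∑ l : {l // ¬ P l}, S j l.1 * v a l.1) =O[(U : Filter α)] (fun _ => (1:ℝ)) :=
      (isBigO_const_const _ one_ne_zero _).sub h1
    refine h2.congr' ?_ EventuallyEq.rfl
    filter_upwards [h] with a ha
    have e := ha j
    have e2 := Fintype.sum_subtype_add_sum_subtype P (fun l => S j l * v a l)
    simp only [hr, hSN, Matrix.mulVec, dotProduct, Matrix.submatrix_apply] at e ⊢
    linarith
  have h3 : (fun a => ∑ l, SN⁻¹ j l * r a l) =O[(U : Filter α)] (fun _ => (1:ℝ)) :=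
    IsBigO.fun_sum fun l _ => (hrO l).const_mul_left _
  refine h3.congr_left fun a => ?_
  have e : SN⁻¹.mulVec (SN.mulVec (fun j => v a j)) = fun j => v a j.1 := by
    rw [Matrix.mulVec_mulVec, Matrix.nonsing_inv_mul _ ((Matrix.isUnit_iff_isUnit_det _).1 hSNp.isUnit), Matrix.one_mulVec]
  have e' := congrFun e j
  simp only [hr, mul_sub (SN⁻¹ j _) (SN.mulVec _ _), Finset.sum_sub_distrib]
  rw [← e']
  rfl

lemma aux_identity (n : ℕ) (μ : Fin n → ℝ) (Sig : Matrix (Fin n) (Fin n) ℝ)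
    (hSig : Sig.PosDef)
    (D : Matrix (Fin n) (Fin n) ℝ) (hD : D = Sig⁻¹) (θ : ℝ) (hθ : 0 < θ) (x0 : Fin n → ℝ)
    (hx : ∀ i, θ * Real.exp (μ i + x0 i) + D.mulVec x0 i = 0) :
        ((2 * π) ^ (-(n : ℝ) / 2) * Sig.det ^ (-(1 : ℝ) / 2) *
            ∫ x : Fin n → ℝ,
              Real.exp (-(θ * ∑ i, Real.exp (μ i + x i) +
                (1 / 2) * (x ⬝ᵥ D.mulVec x)))) /
          ((1 + Sig * Matrix.diagonal fun i => θ * Real.exp (μ i + x0 i)).det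
              ^ (-(1 : ℝ) / 2) *
            Real.exp ((1 - (1 / 2 : ℝ) • x0) ⬝ᵥ D.mulVec x0)) =
      (∫ y : Fin n → ℝ, Real.exp (-(∑ i, (θ * Real.exp (μ i + x0 i)) * (Real.exp (y i) - 1 - y i) +
        (1 / 2) * (y ⬝ᵥ D.mulVec y)))) /
      (∫ y : Fin n → ℝ, Real.exp (-(∑ i, (θ * Real.exp (μ i + x0 i)) * (y i ^ 2 / 2) +
        (1 / 2) * (y ⬝ᵥ D.mulVec y)))) := by
  set lam : Fin n → ℝ := fun i => θ * Real.exp (μ i + x0 i) with hlam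
  have hlpos : ∀ i, 0 < lam i := fun i => by simp only [hlam]; positivity
  have hDp : D.PosDef := hD ▸ hSig.inv
  have hDx : D.mulVec x0 = fun i => - lam i := by
    funext i
    have := hx i
    simp only [hlam]; linarith
  have hsym : Dᵀ = D := by
    have h : D.IsSymm := by simpa using hDp.isHermitian
    exact h
  -- numerator
  have e1 : ∫ x : Fin n → ℝ, Real.exp (-(θ * ∑ i, Real.exp (μ i + x i) +
                (1 / 2) * (x ⬝ᵥ D.mulVec x))) =
      Real.exp ((1 - (1 / 2 : ℝ) • x0) ⬝ᵥ D.mulVec x0) *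
      ∫ y : Fin n → ℝ, Real.exp (-(∑ i, lam i * (Real.exp (y i) - 1 - y i) +
        (1 / 2) * (y ⬝ᵥ D.mulVec y))) := by
    rw [← integral_const_mul, ← integral_add_right_eq_self _ x0]
    congr 1
    funext y
    rw [← Real.exp_add]
    congr 1
    have q0 : x0 ⬝ᵥ D.mulVec y = y ⬝ᵥ D.mulVec x0 := by
      rw [Matrix.dotProduct_mulVec, ← Matrix.mulVec_transpose, hsym, dotProduct_comm]
    have q1 : (y + x0) ⬝ᵥ D.mulVec (y + x0) = y ⬝ᵥ D.mulVec y + 2 * (y ⬝ᵥ D.mulVec x0) + x0 ⬝ᵥ D.mulVec x0 := by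
      rw [Matrix.mulVec_add, dotProduct_add, add_dotProduct, add_dotProduct, q0]
      ring
    have q2 : θ * ∑ i, Real.exp (μ i + (y + x0) i) = ∑ i, lam i * Real.exp (y i) := by
      rw [Finset.mul_sum]
      apply Finset.sum_congr rfl
      intro i _
      simp only [hlam, Pi.add_apply]
      rw [mul_assoc, ← Real.exp_add]
      congr 2; ring
    have q3 : y ⬝ᵥ D.mulVec x0 = - ∑ i, lam i * y i := by
      rw [hDx]; simp [dotProduct, mul_comm]
    have q4 : (1 : Fin n → ℝ) ⬝ᵥ D.mulVec x0 = - ∑ i, lam i := by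
      rw [hDx]; simp [dotProduct]
    rw [q1, q2, q3, sub_dotProduct, smul_dotProduct, q4]
    simp only [mul_sub, Finset.sum_sub_distrib, mul_one, smul_eq_mul]
    ring
  -- denominator
  have hM : (D + Matrix.diagonal lam).PosDef :=
    hDp.add (Matrix.PosDef.diagonal hlpos)
  have e2 : ∫ y : Fin n → ℝ, Real.exp (-(∑ i, lam i * (y i ^ 2 / 2) +
        (1 / 2) * (y ⬝ᵥ D.mulVec y))) =
      (2 * π) ^ ((n : ℝ) / 2) * (D + Matrix.diagonal lam).det ^ (-(1 : ℝ) / 2) := by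
    rw [← aux_gauss _ hM]
    congr 1
    funext y
    congr 2
    rw [Matrix.add_mulVec, dotProduct_add]
    have : y ⬝ᵥ (Matrix.diagonal lam).mulVec y = ∑ i, lam i * y i ^ 2 := by
      simp only [dotProduct, Matrix.mulVec_diagonal]
      apply Finset.sum_congr rfl
      intros; ring
    rw [this, mul_add, Finset.mul_sum, add_comm]
    congr 1
    apply Finset.sum_congr rfl
    intros; ring
  have e3 : (1 + Sig * Matrix.diagonal lam).det = Sig.det * (D + Matrix.diagonal lam).det := by
    rw [← Matrix.det_mul, mul_add, hD, Matrix.mul_nonsing_inv _ ((Matrix.isUnit_iff_isUnit_det _).1 hSig.isUnit)]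
  have p1 : 0 < Sig.det := hSig.det_pos
  have p2 : 0 < (D + Matrix.diagonal lam).det := hM.det_pos
  rw [e1, e2, e3, Real.mul_rpow p1.le p2.le, neg_div, Real.rpow_neg (by positivity)]
  have p3 : 0 < Sig.det ^ (-(1:ℝ) / 2) := by positivity
  have p4 : 0 < (D + Matrix.diagonal lam).det ^ (-(1:ℝ) / 2) := by positivity
  have p5 : 0 < (2 * π) ^ ((n:ℝ) / 2) := by positivity
  have p6 := Real.exp_pos ((1 - (1 / 2 : ℝ) • x0) ⬝ᵥ D.mulVec x0)
  generalize ∫ y : Fin n → ℝ, Real.exp (-(∑ i, lam i * (Real.exp (y i) - 1 - y i) +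
        (1 / 2) * (y ⬝ᵥ D.mulVec y))) = F
  generalize Sig.det ^ (-(1:ℝ) / 2) = A at *
  generalize (D + Matrix.diagonal lam).det ^ (-(1:ℝ) / 2) = B at *
  generalize Real.exp ((1 - (1 / 2 : ℝ) • x0) ⬝ᵥ D.mulVec x0) = G at *
  field_simp

/-- `I(θ) = L(θ)/L̃(θ) → 1` as `θ → ∞`, where
`L(θ) = (2π)^{-n/2} (det Σ)^{-1/2} ∫ exp{−h_θ(x)} dx` and
`L̃(θ) = det(I + ΣΛ(θ))^{-1/2} exp{(1 − ½x*(θ))ᵀ D x*(θ)}` with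
`Λ(θ) = θ diag(e^{μ + x*(θ)})` and `x*(θ)` the solution of `θ e^{μ+x} + Dx = 0`. -/
theorem correction_factor_tendsto_one
    (n : ℕ) (hn : 1 ≤ n) (μ : Fin n → ℝ) (Sig : Matrix (Fin n) (Fin n) ℝ)
    (hSig : Sig.PosDef)
    (D : Matrix (Fin n) (Fin n) ℝ) (hD : D = Sig⁻¹)
    (xs : ℝ → Fin n → ℝ)
    (hxs : ∀ θ > (0 : ℝ), ∀ i, θ * Real.exp (μ i + xs θ i) + D.mulVec (xs θ) i = 0) :
    Tendsto
      (fun θ : ℝ =>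
        ((2 * π) ^ (-(n : ℝ) / 2) * Sig.det ^ (-(1 : ℝ) / 2) *
            ∫ x : Fin n → ℝ,
              Real.exp (-(θ * ∑ i, Real.exp (μ i + x i) +
                (1 / 2) * (x ⬝ᵥ D.mulVec x)))) /
          ((1 + Sig * Matrix.diagonal fun i => θ * Real.exp (μ i + xs θ i)).det
              ^ (-(1 : ℝ) / 2) *
            Real.exp ((1 - (1 / 2 : ℝ) • xs θ) ⬝ᵥ D.mulVec (xs θ))))
      atTop (nhds 1) := by
  have hDp : D.PosDef := hD ▸ hSig.inv
  apply tendsto_of_subseq_tendsto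
  intro ns hns
  obtain ⟨K, hK⟩ := eventually_atTop.1 (hns.eventually_gt_atTop 0)
  set u : ℕ → ℝ := fun k => ns (k + K) with hu
  have hupos : ∀ k, 0 < u k := fun k => hK _ (Nat.le_add_left _ _)
  have hut : Tendsto u atTop atTop := hns.comp (tendsto_add_atTop_nat K)
  set lam : ℕ → Fin n → ℝ := fun k i => u k * Real.exp (μ i + xs (u k) i) with hlam
  have hlpos : ∀ k i, 0 < lam k i := fun k i => mul_pos (hupos k) (Real.exp_pos _)
  set s : ℕ → Fin n → ℝ := fun k i => (Real.sqrt (1 + lam k i))⁻¹ with hs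
  have hspos : ∀ k i, 0 < s k i := fun k i => by
    have := hlpos k i
    simp only [hs]; positivity
  have hsl : ∀ k i, s k i ^ 2 * (1 + lam k i) = 1 := fun k i => by
    have := hlpos k i
    simp only [hs]
    rw [inv_pow, Real.sq_sqrt (by linarith), inv_mul_cancel₀ (by linarith)]
  have hs1 : ∀ k, s k ∈ Set.Icc (0 : Fin n → ℝ) 1 := fun k =>
    ⟨fun i => (hspos k i).le, fun i => by
      have h1 := hspos k i
      have h2 := hlpos k i
      have h3 := hsl k i
      have : s k i ≤ 1 := by nlinarith [mul_pos (pow_pos h1 2) h2]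
      exact this⟩
  obtain ⟨b, -, φ, hφ, hb⟩ := isCompact_Icc.tendsto_subseq hs1
  have hbi : ∀ i, Tendsto (fun k => s (φ k) i) atTop (nhds (b i)) := fun i =>
    (tendsto_pi_nhds.1 hb) i
  have hb' : ∀ i, b i = 0 ∨ b i = 1 := by
    intro i
    set U : Ultrafilter ℕ := Ultrafilter.of atTop with hU
    have hUle : (U : Filter ℕ) ≤ atTop := Ultrafilter.of_le _
    have hd := aux_dichotomy U Sig hSig (fun k => Real.log (u (φ k)))
      ((Real.tendsto_log_atTop.comp (hut.comp hφ.tendsto_atTop)).mono_left hUle) μ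
      (fun k => lam (φ k)) (Eventually.of_forall fun k i => hlpos _ i) (Eventually.of_forall fun k j => by
        have hDx : lam (φ k) = - D.mulVec (xs (u (φ k))) := by
          funext l
          have := hxs _ (hupos (φ k)) l
          simp only [hlam, Pi.neg_apply]; linarith
        have h1 : Sig.mulVec (lam (φ k)) = - xs (u (φ k)) := by
          rw [hDx, Matrix.mulVec_neg, Matrix.mulVec_mulVec, hD,
            Matrix.mul_nonsing_inv _ ((Matrix.isUnit_iff_isUnit_det _).1 hSig.isUnit), Matrix.one_mulVec]
        rw [h1]
        simp only [hlam, Pi.neg_apply]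
        rw [Real.log_mul (hupos _).ne' (Real.exp_pos _).ne', Real.log_exp]
        ring) i
    have hbU := (hbi i).mono_left hUle
    rcases hd with hd | hd
    · right
      refine tendsto_nhds_unique hbU ?_
      have := ((Real.continuous_sqrt.tendsto _).comp (hd.const_add 1)).inv₀ (by simp)
      simpa [hs, Function.comp_def] using this
    · left
      refine tendsto_nhds_unique hbU ?_
      exact tendsto_inv_atTop_zero.comp (Real.tendsto_sqrt_atTop.comp (tendsto_atTop_add_const_left _ 1 hd))
  refine ⟨fun k => φ k + K, ?_⟩
  have hfin := aux_ratio D hDp (fun k => lam (φ k)) (fun k => s (φ k)) b (fun k => hlpos _) (fun k => hspos _)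
    (fun k => hsl _) hbi hb'
  refine hfin.congr fun k => ?_
  exact (aux_identity n μ Sig hSig D hD (u (φ k)) (hupos _) (xs (u (φ k))) (hxs _ (hupos _))).symm
end

section
/- Let D be a symmetric positive definite n×n real matrix and let A, B, C, E be pairwise disjoint sets whose union is {1,…,n}. Let S = {w ∈ ℝ^n : w_i = 0 for i ∈ A, w_i = 1 for i ∈ B, w_i ≤ 0 for i ∈ C, (Dw)_i = 0 for i ∈ E}, assume S is nonempty, and let w̄ minimise w ↦ wᵀ D w over S. Then for every i ∈ C: (D w̄)_i ≤ 0, and (D w̄)_i = 0 whenever w̄_i < 0. -/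
open Matrix

/-- Let `D` be symmetric positive definite and `A, B, C, E` be
pairwise disjoint sets with union `{1,…,n}`. Let
`S = {w : w_i = 0 on A, w_i = 1 on B, w_i ≤ 0 on C, (Dw)_i = 0 on E}` be
nonempty and `w̄` minimise `w ↦ wᵀ D w` over `S`. Then for every `i ∈ C`:
`(D w̄)_i ≤ 0`, and `(D w̄)_i = 0` whenever `w̄_i < 0`. -/
theorem constrained_quadratic_minimiser_kkt
    (n : ℕ) (hn : 1 ≤ n)
    (D : Matrix (Fin n) (Fin n) ℝ) (hD : D.PosDef)
    (A B C E : Finset (Fin n))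
    (hAB : Disjoint A B) (hAC : Disjoint A C) (hAE : Disjoint A E)
    (hBC : Disjoint B C) (hBE : Disjoint B E) (hCE : Disjoint C E)
    (hunion : A ∪ B ∪ C ∪ E = Finset.univ)
    (S : Set (Fin n → ℝ))
    (hS : S = {w : Fin n → ℝ |
      (∀ i ∈ A, w i = 0) ∧ (∀ i ∈ B, w i = 1) ∧ (∀ i ∈ C, w i ≤ 0) ∧
      (∀ i ∈ E, D.mulVec w i = 0)})
    (hSne : S.Nonempty)
    (wbar : Fin n → ℝ) (hwbarS : wbar ∈ S)
    (hmin : ∀ v ∈ S, wbar ⬝ᵥ D.mulVec wbar ≤ v ⬝ᵥ D.mulVec v) :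
    ∀ i ∈ C, D.mulVec wbar i ≤ 0 ∧ (wbar i < 0 → D.mulVec wbar i = 0) := by
  intro i hi
  subst hS
  obtain ⟨hwA, hwB, hwC, hwE⟩ := hwbarS
  have hpos : ∀ v : Fin n → ℝ, v ≠ 0 → 0 < v ⬝ᵥ D.mulVec v := fun v hv => by
    simpa using hD.dotProduct_mulVec_pos hv
  have hsymm : ∀ u v : Fin n → ℝ, u ⬝ᵥ D.mulVec v = v ⬝ᵥ D.mulVec u := fun u v => by
    have hT : Dᵀ = D := by simpa using hD.isHermitian.eq
    rw [dotProduct_mulVec, ← mulVec_transpose, hT, dotProduct_comm]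
  let L : (Fin n → ℝ) →ₗ[ℝ] (Fin n → ℝ) :=
    { toFun := fun v j => if j ∈ E then D.mulVec v j else v j
      map_add' := fun u v => by
        funext j
        by_cases h : j ∈ E <;> simp [h, mulVec_add]
      map_smul' := fun c v => by
        funext j
        by_cases h : j ∈ E <;> simp [h, mulVec_smul] }
  have hL : ∀ v j, L v j = if j ∈ E then D.mulVec v j else v j := fun _ _ => rfl
  have hinj : Function.Injective L := by
    rw [← LinearMap.ker_eq_bot, LinearMap.ker_eq_bot']
    intro v hv
    by_contra hne
    have h := hpos v hne
    have h0 : v ⬝ᵥ D.mulVec v = 0 := by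
      refine Finset.sum_eq_zero fun j _ => ?_
      have hj := congrFun hv j
      rw [hL] at hj
      by_cases h : j ∈ E
      · have : D.mulVec v j = 0 := by simpa [h] using hj
        rw [this, mul_zero]
      · have : v j = 0 := by simpa [h] using hj
        rw [this, zero_mul]
    linarith
  obtain ⟨d, hd⟩ := (LinearMap.injective_iff_surjective.mp hinj) (Pi.single i 1)
  have hiE : i ∉ E := Finset.disjoint_left.mp hCE hi
  have hdE : ∀ j ∈ E, D.mulVec d j = 0 := fun j hj => by
    have h := congrFun hd j
    have hji : j ≠ i := fun h => hiE (h ▸ hj)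
    rw [hL] at h
    simpa [hj, hji] using h
  have hdN : ∀ j, j ∉ E → d j = (Pi.single i 1 : Fin n → ℝ) j := fun j hj => by
    have h := congrFun hd j
    rw [hL] at h
    simpa only [hj, if_false] using h
  have hdi : d i = 1 := by simpa using hdN i hiE
  have hd0 : ∀ j, j ∉ E → j ≠ i → d j = 0 := fun j hj hji => by
    simpa [hji] using hdN j hj
  have hq : 0 < d ⬝ᵥ D.mulVec d := hpos d fun h => by simp [h] at hdi
  have hg : d ⬝ᵥ D.mulVec wbar = D.mulVec wbar i := by
    unfold dotProduct
    rw [Finset.sum_eq_single i]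
    · rw [hdi, one_mul]
    · intro j _ hji
      by_cases h : j ∈ E
      · rw [hwE j h, mul_zero]
      · rw [hd0 j h hji, zero_mul]
    · simp
  have key : ∀ t : ℝ, wbar i + t ≤ 0 →
      0 ≤ 2 * t * D.mulVec wbar i + t ^ 2 * (d ⬝ᵥ D.mulVec d) := by
    intro t ht
    have h := hmin (wbar + t • d) ⟨?_, ?_, ?_, ?_⟩
    · simp only [mulVec_add, mulVec_smul, dotProduct_add, add_dotProduct, smul_dotProduct,
        dotProduct_smul, smul_eq_mul, hsymm wbar d, hg] at h
      linarith
    · intro j hj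
      have := hd0 j (Finset.disjoint_left.mp hAE hj)
        (fun h => Finset.disjoint_left.mp hAC hj (h ▸ hi))
      simp [this, hwA j hj]
    · intro j hj
      have := hd0 j (Finset.disjoint_left.mp hBE hj)
        (fun h => Finset.disjoint_left.mp hBC hj (h ▸ hi))
      simp [this, hwB j hj]
    · intro j hj
      by_cases hji : j = i
      · subst hji
        simpa [hdi] using ht
      · have := hd0 j (Finset.disjoint_left.mp hCE hj) hji
        simpa [this] using hwC j hj
    · intro j hj
      simp [mulVec_add, mulVec_smul, hwE j hj, hdE j hj]
  generalize D.mulVec wbar i = g at *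
  generalize d ⬝ᵥ D.mulVec d = q at *
  have hwi := hwC i hi
  have hle : g ≤ 0 := by
    by_contra! hgpos
    have hp : 0 < g / q := div_pos hgpos hq
    have h := key (-(g / q)) (by linarith)
    have e : g / q * q = g := div_mul_cancel₀ g hq.ne'
    have e2 : (-(g / q)) ^ 2 * q = g / q * g := by
      rw [neg_sq, sq, mul_assoc, e]
    nlinarith [mul_pos hp hgpos]
  refine ⟨hle, fun hneg => ?_⟩
  by_contra hne
  have hlt : g < 0 := lt_of_le_of_ne hle hne
  have ht0 : 0 < min (-g / q) (-wbar i) := lt_min (div_pos (by linarith) hq) (by linarith)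
  have ht1 : min (-g / q) (-wbar i) * q ≤ -g := (le_div_iff₀ hq).mp (min_le_left _ _)
  have ht2 : min (-g / q) (-wbar i) ≤ -wbar i := min_le_right _ _
  have h := key (min (-g / q) (-wbar i)) (by linarith)
  generalize min (-g / q) (-wbar i) = t at *
  nlinarith [mul_le_mul_of_nonneg_left ht1 ht0.le, mul_pos ht0 (neg_pos.mpr hlt)]
end

section
/- Let Σ be a symmetric positive definite n×n real matrix with D = Σ^{-1}, and suppose every row sum a_i = ∑_j D_{ij} is strictly positive. Then the vector w̄ with w̄_i = a_i / ∑_{j=1}^n a_j is the unique minimiser of w ↦ wᵀ Σ w over the simplex Δ = {w ∈ ℝ^n : w_i ≥ 0 for all i, ∑_{i=1}^n w_i = 1}. -/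
open Matrix

/-- If every row sum `a_i = ∑ j, D i j` of `D = Σ⁻¹` is strictly
positive, then the vector `w̄` with `w̄_i = a_i / ∑ j, a_j` is the unique
minimiser of `w ↦ wᵀ Σ w` over the simplex
`Δ = {w : ∀ i, w i ≥ 0, ∑ i, w i = 1}`. -/
theorem minimum_variance_portfolio_positive_row_sums
    (n : ℕ) (hn : 1 ≤ n)
    (Sig : Matrix (Fin n) (Fin n) ℝ) (hSig : Sig.PosDef)
    (D : Matrix (Fin n) (Fin n) ℝ) (hD : D = Sig⁻¹)
    (a : Fin n → ℝ) (ha : a = D.mulVec 1)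
    (hapos : ∀ i, 0 < a i) :
    let wbar : Fin n → ℝ := fun i => a i / ∑ j, a j
    (∀ i, 0 ≤ wbar i) ∧ (∑ i, wbar i = 1) ∧
    (∀ v : Fin n → ℝ, (∀ i, 0 ≤ v i) → (∑ i, v i = 1) →
      wbar ⬝ᵥ Sig.mulVec wbar ≤ v ⬝ᵥ Sig.mulVec v) ∧
    (∀ v : Fin n → ℝ, (∀ i, 0 ≤ v i) → (∑ i, v i = 1) →
      (∀ u : Fin n → ℝ, (∀ i, 0 ≤ u i) → (∑ i, u i = 1) →
        v ⬝ᵥ Sig.mulVec v ≤ u ⬝ᵥ Sig.mulVec u) → v = wbar) := by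
  intro wbar
  have hs : 0 < ∑ j, a j :=
    Finset.sum_pos (fun i _ => hapos i) ⟨⟨0, hn⟩, Finset.mem_univ _⟩
  have hw0 : ∀ i, 0 ≤ wbar i := fun i => (div_pos (hapos i) hs).le
  have hw1 : ∑ i, wbar i = 1 := by
    simp only [wbar]
    rw [← Finset.sum_div, div_self hs.ne']
  have hu : IsUnit Sig.det := hSig.det_pos.ne'.isUnit
  have hSa : Sig *ᵥ a = 1 := by
    rw [ha, hD, Matrix.mulVec_mulVec, Matrix.mul_nonsing_inv _ hu, Matrix.one_mulVec]
  have hwa : wbar = (∑ j, a j)⁻¹ • a := by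
    funext i
    simp only [wbar, Pi.smul_apply, smul_eq_mul]
    rw [div_eq_inv_mul]
  have hSw : Sig *ᵥ wbar = (∑ j, a j)⁻¹ • (1 : Fin n → ℝ) := by
    rw [hwa, Matrix.mulVec_smul, hSa]
  have hT : Sigᵀ = Sig := by
    have h := hSig.1.eq
    rwa [Matrix.conjTranspose_eq_transpose_of_trivial] at h
  have hdot : ∀ v : Fin n → ℝ, ∑ i, v i = 1 → v ⬝ᵥ Sig *ᵥ wbar = (∑ j, a j)⁻¹ := by
    intro v hv
    rw [hSw, dotProduct_smul, dotProduct_one, hv, smul_eq_mul, mul_one]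
  have hsymm : ∀ v : Fin n → ℝ, wbar ⬝ᵥ Sig *ᵥ v = v ⬝ᵥ Sig *ᵥ wbar := by
    intro v
    rw [Matrix.dotProduct_mulVec, ← Matrix.mulVec_transpose, hT, dotProduct_comm]
  have key : ∀ v : Fin n → ℝ, ∑ i, v i = 1 →
      v ⬝ᵥ Sig *ᵥ v = wbar ⬝ᵥ Sig *ᵥ wbar + (v - wbar) ⬝ᵥ Sig *ᵥ (v - wbar) := by
    intro v hv
    rw [Matrix.mulVec_sub, dotProduct_sub, sub_dotProduct, sub_dotProduct, hsymm v,
      hdot v hv, hdot wbar hw1]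
    ring
  have hpos : ∀ x : Fin n → ℝ, x ≠ 0 → 0 < x ⬝ᵥ Sig *ᵥ x := by
    intro x hx
    simpa using hSig.dotProduct_mulVec_pos hx
  refine ⟨hw0, hw1, ?_, ?_⟩
  · intro v _ hv
    rw [key v hv]
    by_cases h : v - wbar = 0
    · simp [h]
    · linarith [hpos _ h]
  · intro v _ hv hmin
    by_contra hne
    have h1 := hmin wbar hw0 hw1
    rw [key v hv] at h1
    linarith [hpos _ (sub_ne_zero.mpr hne)]
end
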